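/- arXiv:1312.0843 — 4 statements merged into one kernel-verified Lean document; each statement's English description precedes it below -/
import Mathlib

section
/- Let σ and w be Radon measures on ℝ and let B : 𝓕 × 𝓕 → ℝ be a bilinear form with the Hilbert-kernel property on disjoint supports. Then B satisfies the global testing conditions with some finite constants 𝓗_glob, 𝓗*_glob if and only if B satisfies the local testing conditions with some finite constants 𝓗, 𝓗* and the Muckenhoupt–Poisson constants [σ,w]_{A₂}* and [w,σ]_{A₂}* are finite; moreover 𝓗_glob + 𝓗*_glob is comparable, up to absolute constants, to 𝓗 + 𝓗* + [σ,w]_{A₂}* + [w,σ]_{A₂}*. -/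
/-!
Local testing follows from global testing because restriction to an interval decreases the
`L²` norm. The content is the link between the Muckenhoupt–Poisson conditions and the part of `B`
away from the diagonal, where `B` is given by the Hilbert kernel.

*Sufficiency* (`globalTesting_of_local`). To bound `B(1_I, g)`, split `g` into its parts to the left
of `I`, on `I`, and to the right of `I`. The middle part is local testing. The outer parts are
bounded with absolute values inside the integral (`absPairing`). If `u` and `v` are the distances of
`y ∈ I` and `x ∉ I` to the endpoint of `I` between them, then `|x - y|⁻¹ = (u + v)⁻¹`, and a two-weight
Hardy inequality tested on the function `1` (`hardy_pos`) bounds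
`∫ (∫_I |x - y|⁻¹ dσ(y))² dw(x)` by `20 K σ(I)`, where `K` bounds the products of the mass of `{u ≤ r}`
with `∫_{v > r} v⁻²`, and symmetrically. These products are controlled by the two Muckenhoupt–Poisson
constants. The Hardy inequality is proved by writing the square of an integral as twice its ordered
part (`sq_lintegral_le_two_mul`) and exchanging integrals; in the part over larger distances the
quantity reappears with a factor `1/2` and is absorbed.

*Necessity* (`SeparatedTesting.a2star`). For an interval `[p, q)` and a nonnegative step function `g`
supported at positive distance on one side of it, the kernel has constant sign and all integrals
converge absolutely, so global testing bounds the absolute pairing. Choosing for `g` a dyadic step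
function comparable to `1 / |x - p|` bounds `σ[p, q) ∫ |x - p|⁻² dw` over bounded sets off `[p, q)`. A
general interval `I` and each side of its complement are exhausted by compact sets, by inner
regularity; compact subsets of `I` and of one side of `Iᶜ` are at positive distance, so that atoms
at the endpoints and every type of interval are covered.
-/

open MeasureTheory Set

noncomputable section

/-- `𝓕`: finite linear combinations of indicator functions of finite half-open intervals. -/
def InF (f : ℝ → ℝ) : Prop :=
  f ∈ Submodule.span ℝ {g : ℝ → ℝ | ∃ a b : ℝ, g = (Set.Ico a b).indicator 1}

/-- The `L²(μ)` norm of a function. -/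
def l2norm (μ : Measure ℝ) (f : ℝ → ℝ) : ℝ :=
  Real.sqrt (∫ x, f x ^ 2 ∂μ)

/-- The iterated-integral Hilbert pairing `∬ f(y) g(x) (x-y)⁻¹ dσ(y) dw(x)`. -/
def hilbertPairing (σ w : Measure ℝ) (f g : ℝ → ℝ) : ℝ :=
  ∫ x, (∫ y, f y * (x - y)⁻¹ ∂σ) * g x ∂w

/-- `f` and `g` are supported on disjoint intervals. -/
def DisjointlySupported (f g : ℝ → ℝ) : Prop :=
  ∃ I J : Set ℝ, I.OrdConnected ∧ J.OrdConnected ∧ Disjoint I J ∧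
    Function.support f ⊆ I ∧ Function.support g ⊆ J

/-- `B` has the Hilbert-kernel property on disjoint supports. -/
def HilbertKernelProp (σ w : Measure ℝ) (B : (ℝ → ℝ) → (ℝ → ℝ) → ℝ) : Prop :=
  ∀ f g : ℝ → ℝ, InF f → InF g → DisjointlySupported f g →
    B f g = hilbertPairing σ w f g

/-- `B` is bilinear on `𝓕`. -/
def BilinearOnF (B : (ℝ → ℝ) → (ℝ → ℝ) → ℝ) : Prop :=
  (∀ f f' g, InF f → InF f' → InF g → B (f + f') g = B f g + B f' g) ∧
  (∀ (c : ℝ) (f g : ℝ → ℝ), InF f → InF g → B (c • f) g = c * B f g) ∧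
  (∀ f g g', InF f → InF g → InF g' → B f (g + g') = B f g + B f g') ∧
  (∀ (c : ℝ) (f g : ℝ → ℝ), InF f → InF g → B f (c • g) = c * B f g)

/-- Local (Sawyer-type) testing conditions with constants `H`, `H'`. -/
def LocalTesting (σ w : Measure ℝ) (B : (ℝ → ℝ) → (ℝ → ℝ) → ℝ) (H H' : ℝ) : Prop :=
  (∀ (a b : ℝ) (g : ℝ → ℝ), a < b → InF g →
    |B ((Set.Ico a b).indicator 1) ((Set.Ico a b).indicator g)| ≤
      H * Real.sqrt (σ (Set.Ico a b)).toReal * l2norm w g) ∧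
  (∀ (a b : ℝ) (f : ℝ → ℝ), a < b → InF f →
    |B ((Set.Ico a b).indicator f) ((Set.Ico a b).indicator 1)| ≤
      H' * l2norm σ f * Real.sqrt (w (Set.Ico a b)).toReal)

/-- The Muckenhoupt–Poisson `A₂` condition `[σ,w]_{A₂}* ≤ A`: for every finite interval `I`
with center `c_I`, `σ(I) ∫_{Iᶜ} (x - c_I)⁻² dw(x) ≤ A²`. -/
def A2star (σ w : Measure ℝ) (A : ℝ) : Prop :=
  ∀ I : Set ℝ, I.OrdConnected → Bornology.IsBounded I →
    σ I * ∫⁻ x in Iᶜ, ENNReal.ofReal (((x - (sInf I + sSup I) / 2) ^ 2)⁻¹) ∂w ≤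
      ENNReal.ofReal (A ^ 2)

/-- Global testing conditions with constants `Hg`, `Hg'`. -/
def GlobalTesting (σ w : Measure ℝ) (B : (ℝ → ℝ) → (ℝ → ℝ) → ℝ) (Hg Hg' : ℝ) : Prop :=
  (∀ (a b : ℝ) (g : ℝ → ℝ), a < b → InF g →
    |B ((Set.Ico a b).indicator 1) g| ≤
      Hg * Real.sqrt (σ (Set.Ico a b)).toReal * l2norm w g) ∧
  (∀ (a b : ℝ) (f : ℝ → ℝ), a < b → InF f →
    |B f ((Set.Ico a b).indicator 1)| ≤
      Hg' * l2norm σ f * Real.sqrt (w (Set.Ico a b)).toReal)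

open scoped ENNReal NNReal

/-! ### A two-weight Hardy inequality -/

section Hardy

variable {α β : Type*} [MeasurableSpace α] [MeasurableSpace β]

open Classical in
/-- The square of an integral is at most twice the integral over the part of the square where the
two variables are ordered by a total relation `R`. -/
lemma sq_lintegral_le_two_mul {μ : Measure α} [SFinite μ] {f : α → ℝ≥0∞} (hf : Measurable f)
    {R : α → α → Prop} (hR : MeasurableSet {p : α × α | R p.1 p.2})
    (htot : ∀ s t, R s t ∨ R t s) :
    (∫⁻ t, f t ∂μ) ^ 2 ≤ 2 * ∫⁻ s, f s * ∫⁻ t, (if R s t then f t else 0) ∂μ ∂μ := by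
  have hm : Measurable (fun p : α × α => if R p.1 p.2 then f p.2 else 0) :=
    Measurable.ite hR (by fun_prop) measurable_const
  have hm2 : Measurable (fun p : α × α => f p.1 * if R p.1 p.2 then f p.2 else 0) :=
    (hf.comp measurable_fst).mul hm
  have e1 : ∫⁻ s, f s * ∫⁻ t, (if R s t then f t else 0) ∂μ ∂μ
      = ∫⁻ s, ∫⁻ t, f s * (if R s t then f t else 0) ∂μ ∂μ := by
    refine lintegral_congr fun s => ?_
    rw [lintegral_const_mul]
    exact hm.comp measurable_prodMk_left
  have e2 : ∫⁻ s, ∫⁻ t, f s * (if R s t then f t else 0) ∂μ ∂μ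
      = ∫⁻ t, ∫⁻ s, f s * (if R s t then f t else 0) ∂μ ∂μ :=
    lintegral_lintegral_swap hm2.aemeasurable
  have e3 : (∫⁻ t, f t ∂μ) ^ 2 = ∫⁻ s, ∫⁻ t, f s * f t ∂μ ∂μ := by
    rw [sq, ← lintegral_mul_const _ hf]
    refine lintegral_congr fun s => ?_
    rw [lintegral_const_mul _ hf]
  rw [e3, e1, two_mul]
  nth_rw 2 [e2]
  rw [← lintegral_add_left (f := fun s => ∫⁻ t, f s * (if R s t then f t else 0) ∂μ)
    hm2.lintegral_prod_right']
  refine lintegral_mono fun s => ?_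
  dsimp only
  rw [← lintegral_add_left (f := fun t => f s * (if R s t then f t else 0))
    (hm2.comp measurable_prodMk_left)]
  refine lintegral_mono fun t => ?_
  dsimp only
  rcases htot s t with h | h
  · simp [h]
  · simp [h, mul_comm (f t)]

lemma two_mul_le_add_sq_div {q : ℝ≥0∞} {K : ℝ≥0} (hK : 0 < K) :
    2 * q ≤ 4 * K + (4 * K : ℝ≥0∞)⁻¹ * q ^ 2 := by
  induction q with
  | top =>
    have : ((4 * K : ℝ≥0∞)⁻¹) ≠ 0 :=
      ENNReal.inv_ne_zero.2 (ENNReal.mul_ne_top (by simp) (by simp))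
    simp [ENNReal.mul_top this]
  | coe q =>
    have e : (4 * K : ℝ≥0∞)⁻¹ = ((4 * K)⁻¹ : ℝ≥0) := by
      rw [ENNReal.coe_inv (by positivity)]; simp
    rw [e]
    norm_cast
    rw [← NNReal.coe_le_coe]
    push_cast
    have hK' : (0 : ℝ) < K := hK
    rw [← sub_nonneg]
    have : 4 * (K : ℝ) + (4 * (K : ℝ))⁻¹ * (q : ℝ) ^ 2 - 2 * q
        = (4 * (K : ℝ))⁻¹ * (4 * K - q) ^ 2 := by
      field_simp; ring
    rw [this]; positivity

open Classical in
/-- The part of the Hardy operator integrating over smaller distances, tested on the constant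
function `1`. -/
lemma hardy_lower {μ : Measure α} {w : Measure β} [SFinite μ] [SFinite w]
    {u : α → ℝ≥0} {v : β → ℝ≥0} (hu : Measurable u) (hv : Measurable v) {K : ℝ≥0}
    (h1 : ∀ r : ℝ≥0, (∫⁻ t, (if u t ≤ r then 1 else 0) ∂μ) *
      (∫⁻ x, (if r < v x then ((v x : ℝ≥0∞)⁻¹) ^ 2 else 0) ∂w) ≤ K) :
    ∫⁻ x, (∫⁻ t, (if u t < v x then (v x : ℝ≥0∞)⁻¹ else 0) ∂μ) ^ 2 ∂w ≤ 2 * K * μ univ := by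
  set m : ℝ≥0 → ℝ≥0∞ := fun r => ∫⁻ t, (if u t ≤ r then 1 else 0) ∂μ with hm
  have hmm : Measurable m := by
    have : Measurable (fun p : ℝ≥0 × α => if u p.2 ≤ p.1 then (1 : ℝ≥0∞) else 0) :=
      Measurable.ite (measurableSet_le (by fun_prop) (by fun_prop)) measurable_const
        measurable_const
    exact this.lintegral_prod_right'
  have hF : Measurable (fun p : β × α =>
      (if u p.2 < v p.1 then ((v p.1 : ℝ≥0∞)⁻¹) ^ 2 * m (u p.2) else 0)) :=
    Measurable.ite (measurableSet_lt (by fun_prop) (by fun_prop)) (by fun_prop) measurable_const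
  have key : ∀ x, (∫⁻ t, (if u t < v x then (v x : ℝ≥0∞)⁻¹ else 0) ∂μ) ^ 2 ≤
      2 * ∫⁻ s, (if u s < v x then ((v x : ℝ≥0∞)⁻¹) ^ 2 * m (u s) else 0) ∂μ := by
    intro x
    refine (sq_lintegral_le_two_mul (R := fun s t => u t ≤ u s) ?_ ?_ ?_).trans ?_
    · exact Measurable.ite (measurableSet_lt hu measurable_const) measurable_const
        measurable_const
    · exact measurableSet_le (by fun_prop) (by fun_prop)
    · intro s t; exact le_total _ _
    · gcongr with s
      split_ifs with hs
      · rw [sq, mul_assoc]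
        gcongr
        rw [hm]
        dsimp only
        rw [← lintegral_const_mul]
        · refine lintegral_mono fun t => ?_
          dsimp only
          split_ifs <;> simp
        · exact Measurable.ite (measurableSet_le hu measurable_const) measurable_const
            measurable_const
      · simp
  calc _ ≤ ∫⁻ x, 2 * ∫⁻ s, (if u s < v x then ((v x : ℝ≥0∞)⁻¹) ^ 2 * m (u s) else 0) ∂μ ∂w :=
        lintegral_mono key
    _ = 2 * ∫⁻ s, ∫⁻ x, (if u s < v x then ((v x : ℝ≥0∞)⁻¹) ^ 2 * m (u s) else 0) ∂w ∂μ := by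
        rw [lintegral_const_mul _ hF.lintegral_prod_right']
        congr 1
        exact lintegral_lintegral_swap hF.aemeasurable
    _ ≤ 2 * ∫⁻ s, K ∂μ := by
        gcongr with s
        refine le_trans (le_of_eq ?_) (h1 (u s))
        rw [← lintegral_const_mul]
        · refine lintegral_congr fun x => ?_
          split_ifs
          · rw [mul_comm]
          · simp
        · exact Measurable.ite (measurableSet_lt measurable_const hv) (by fun_prop)
            measurable_const
    _ = _ := by simp [mul_assoc]

open Classical in
/-- The part of the Hardy operator integrating over larger distances, tested on the constant
function `1`. Here the kernel `u⁻¹` is replaced by a bounded function `φ`, which makes the quantity `X`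
to be estimated finite; the proof derives `X ≤ 4 K μ(univ) + X / 2`. -/
lemma hardy_upper_aux {μ : Measure α} {w : Measure β} [IsFiniteMeasure μ] [IsFiniteMeasure w]
    {u : α → ℝ≥0} {v : β → ℝ≥0} (hu : Measurable u) (hv : Measurable v) {K : ℝ≥0} (hK : 0 < K)
    {φ : α → ℝ≥0∞} (hφ : Measurable φ) (N : ℝ≥0) (hφN : ∀ t, φ t ≤ N)
    (h2 : ∀ r : ℝ≥0, (∫⁻ x, (if v x ≤ r then 1 else 0) ∂w) *
      (∫⁻ t, (if r ≤ u t then φ t ^ 2 else 0) ∂μ) ≤ K) :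
    ∫⁻ x, (∫⁻ t, (if v x ≤ u t then φ t else 0) ∂μ) ^ 2 ∂w ≤ 8 * K * μ univ := by
  set T : ℝ≥0 → ℝ≥0∞ := fun r => ∫⁻ t, (if r ≤ u t then φ t else 0) ∂μ with hT
  set m : ℝ≥0 → ℝ≥0∞ := fun r => ∫⁻ x, (if v x ≤ r then 1 else 0) ∂w with hm
  set X := ∫⁻ x, (T (v x)) ^ 2 ∂w with hX
  change X ≤ _
  have hTm : Measurable T := by
    have : Measurable (fun p : ℝ≥0 × α => if p.1 ≤ u p.2 then φ p.2 else 0) :=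
      Measurable.ite (measurableSet_le (by fun_prop) (by fun_prop)) (by fun_prop)
        measurable_const
    exact this.lintegral_prod_right'
  have hmm : Measurable m := by
    have : Measurable (fun p : ℝ≥0 × β => if v p.2 ≤ p.1 then (1 : ℝ≥0∞) else 0) :=
      Measurable.ite (measurableSet_le (by fun_prop) (by fun_prop)) measurable_const
        measurable_const
    exact this.lintegral_prod_right'
  have hTanti : Antitone T := by
    intro r r' h
    refine lintegral_mono fun t => ?_
    dsimp only
    split_ifs with h1 h2
    · exact le_rfl
    · exact absurd (h.trans h1) h2
    · exact zero_le
    · exact le_rfl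
  have hXfin : X ≠ ∞ := by
    have hb : ∀ r, T r ≤ N * μ univ := by
      intro r
      calc T r ≤ ∫⁻ t, N ∂μ := by
            refine lintegral_mono fun t => ?_
            dsimp only
            split_ifs
            · exact hφN t
            · exact zero_le
        _ = _ := by simp
    refine ne_top_of_le_ne_top (b := (N * μ univ) ^ 2 * w univ) ?_ ?_
    · exact ENNReal.mul_ne_top (ENNReal.pow_ne_top (ENNReal.mul_ne_top (by simp) (by simp)))
        (by simp)
    · calc X ≤ ∫⁻ x, (N * μ univ) ^ 2 ∂w := by
            refine lintegral_mono fun x => ?_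
            dsimp only
            gcongr
            exact hb _
        _ = _ := by simp
  -- `X ≤ 2 ∫ φ T(u) m(u) dμ`, by unfolding the square and exchanging the integrals.
  have step1 : X ≤ ∫⁻ t, 2 * (φ t * T (u t) * m (u t)) ∂μ := by
    have hF : Measurable (fun p : β × α => (if v p.1 ≤ u p.2 then φ p.2 * T (u p.2) else 0)) :=
      Measurable.ite (measurableSet_le (by fun_prop) (by fun_prop)) (by fun_prop)
        measurable_const
    have key : ∀ x, (T (v x)) ^ 2 ≤
        2 * ∫⁻ t, (if v x ≤ u t then φ t * T (u t) else 0) ∂μ := by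
      intro x
      refine (sq_lintegral_le_two_mul (R := fun s t => u s ≤ u t) ?_ ?_ ?_).trans ?_
      · exact Measurable.ite (measurableSet_le measurable_const hu) hφ measurable_const
      · exact measurableSet_le (by fun_prop) (by fun_prop)
      · intro s t; exact le_total _ _
      · gcongr with s
        split_ifs with hs
        · gcongr
          refine lintegral_mono fun t => ?_
          dsimp only
          split_ifs <;> simp
        · simp
    calc X ≤ ∫⁻ x, 2 * ∫⁻ t, (if v x ≤ u t then φ t * T (u t) else 0) ∂μ ∂w :=
          lintegral_mono key
      _ = 2 * ∫⁻ t, ∫⁻ x, (if v x ≤ u t then φ t * T (u t) else 0) ∂w ∂μ := by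
          rw [lintegral_const_mul _ hF.lintegral_prod_right']
          congr 1
          exact lintegral_lintegral_swap hF.aemeasurable
      _ = ∫⁻ t, 2 * (φ t * T (u t) * m (u t)) ∂μ := by
          rw [lintegral_const_mul _ (by fun_prop)]
          congr 1
          refine lintegral_congr fun t => ?_
          rw [hm]
          dsimp only
          rw [← lintegral_const_mul (φ t * T (u t))]
          · refine lintegral_congr fun x => ?_
            split_ifs <;> simp
          · exact Measurable.ite (measurableSet_le hv measurable_const) measurable_const
              measurable_const
  -- Unfolding `m²` in the same way, with `T` decreasing, brings in the hypothesis `h2`.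
  have step2 : ∫⁻ t, (φ t * T (u t) * m (u t)) ^ 2 ∂μ ≤ 2 * K * X := by
    have hF : Measurable (fun p : α × β =>
        (if v p.2 ≤ u p.1 then (φ p.1 * T (u p.1)) ^ 2 * m (v p.2) else 0)) :=
      Measurable.ite (measurableSet_le (by fun_prop) (by fun_prop)) (by fun_prop)
        measurable_const
    have key : ∀ t, (φ t * T (u t) * m (u t)) ^ 2 ≤
        2 * ∫⁻ x, (if v x ≤ u t then (φ t * T (u t)) ^ 2 * m (v x) else 0) ∂w := by
      intro t
      have := (sq_lintegral_le_two_mul (μ := w) (f := fun x => if v x ≤ u t then (1 : ℝ≥0∞) else 0)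
        (R := fun s t => v t ≤ v s)
        (Measurable.ite (measurableSet_le hv measurable_const) measurable_const measurable_const)
        (measurableSet_le (by fun_prop) (by fun_prop)) (fun s t => le_total _ _))
      calc (φ t * T (u t) * m (u t)) ^ 2 = (φ t * T (u t)) ^ 2 * (m (u t)) ^ 2 := by
            rw [mul_pow]
        _ ≤ (φ t * T (u t)) ^ 2 * (2 * ∫⁻ x, (if v x ≤ u t then m (v x) else 0) ∂w) := by
            gcongr
            refine this.trans ?_
            gcongr with x
            split_ifs with hs
            · rw [one_mul]
              refine lintegral_mono fun t => ?_
              dsimp only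
              split_ifs <;> simp
            · simp
        _ = _ := by
            rw [mul_left_comm, ← lintegral_const_mul]
            · congr 1
              refine lintegral_congr fun x => ?_
              split_ifs <;> simp
            · exact Measurable.ite (measurableSet_le hv measurable_const) (by fun_prop)
                measurable_const
    calc _ ≤ ∫⁻ t, 2 * ∫⁻ x, (if v x ≤ u t then (φ t * T (u t)) ^ 2 * m (v x) else 0) ∂w ∂μ :=
          lintegral_mono key
      _ = 2 * ∫⁻ x, ∫⁻ t, (if v x ≤ u t then (φ t * T (u t)) ^ 2 * m (v x) else 0) ∂μ ∂w := by
          rw [lintegral_const_mul _ hF.lintegral_prod_right']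
          congr 1
          exact lintegral_lintegral_swap hF.aemeasurable
      _ ≤ 2 * ∫⁻ x, K * T (v x) ^ 2 ∂w := by
          gcongr with x
          calc _ ≤ ∫⁻ t, (T (v x) ^ 2 * m (v x)) * (if v x ≤ u t then φ t ^ 2 else 0) ∂μ := by
                refine lintegral_mono fun t => ?_
                dsimp only
                split_ifs with h
                · rw [mul_pow, mul_comm (T (v x) ^ 2 * m (v x)), mul_assoc]
                  gcongr
                  exact hTanti h
                · simp
            _ = T (v x) ^ 2 * (m (v x) * ∫⁻ t, (if v x ≤ u t then φ t ^ 2 else 0) ∂μ) := by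
                rw [lintegral_const_mul, mul_assoc]
                exact Measurable.ite (measurableSet_le measurable_const hu) (by fun_prop)
                  measurable_const
            _ ≤ K * T (v x) ^ 2 := by
                rw [mul_comm (K : ℝ≥0∞)]
                gcongr
                exact h2 _
      _ = _ := by rw [lintegral_const_mul _ (by fun_prop), mul_assoc]
  have step3 : X ≤ 4 * K * μ univ + 2⁻¹ * X := by
    calc X ≤ ∫⁻ t, 2 * (φ t * T (u t) * m (u t)) ∂μ := step1
      _ ≤ ∫⁻ t, (4 * K + (4 * K : ℝ≥0∞)⁻¹ * (φ t * T (u t) * m (u t)) ^ 2) ∂μ :=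
          lintegral_mono fun t => two_mul_le_add_sq_div hK
      _ = 4 * K * μ univ + (4 * K : ℝ≥0∞)⁻¹ * ∫⁻ t, (φ t * T (u t) * m (u t)) ^ 2 ∂μ := by
          rw [lintegral_add_left measurable_const, lintegral_const,
            lintegral_const_mul _ (by fun_prop)]
      _ ≤ 4 * K * μ univ + (4 * K : ℝ≥0∞)⁻¹ * (2 * K * X) := by gcongr
      _ = _ := by
          congr 1
          rw [← mul_assoc]
          congr 1
          have e : (4 * K : ℝ≥0∞)⁻¹ = ((4 * K)⁻¹ : ℝ≥0) := by
            rw [ENNReal.coe_inv (by positivity)]; simp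
          have e2 : (2⁻¹ : ℝ≥0∞) = ((2⁻¹ : ℝ≥0) : ℝ≥0∞) := by
            rw [ENNReal.coe_inv (by positivity)]; simp
          rw [e, e2]
          norm_cast
          field_simp
          norm_num
  have hμ : μ univ ≠ ∞ := by simp
  lift X to ℝ≥0 using hXfin with X'
  lift μ univ to ℝ≥0 using hμ with M
  have e2 : (2⁻¹ : ℝ≥0∞) = ((2⁻¹ : ℝ≥0) : ℝ≥0∞) := by
    rw [ENNReal.coe_inv (by positivity)]; simp
  rw [e2] at step3
  norm_cast at step3 ⊢
  rw [← NNReal.coe_le_coe] at step3 ⊢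
  push_cast at step3 ⊢
  linarith

open Classical in
/-- The untruncated form of `hardy_upper_aux`, by monotone convergence along `φ = min u⁻¹ n`. -/
lemma hardy_upper {μ : Measure α} {w : Measure β} [IsFiniteMeasure μ] [IsFiniteMeasure w]
    {u : α → ℝ≥0} {v : β → ℝ≥0} (hu : Measurable u) (hv : Measurable v) {K : ℝ≥0} (hK : 0 < K)
    (h2 : ∀ r : ℝ≥0, (∫⁻ x, (if v x ≤ r then 1 else 0) ∂w) *
      (∫⁻ t, (if r ≤ u t then ((u t : ℝ≥0∞)⁻¹) ^ 2 else 0) ∂μ) ≤ K) :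
    ∫⁻ x, (∫⁻ t, (if v x ≤ u t then (u t : ℝ≥0∞)⁻¹ else 0) ∂μ) ^ 2 ∂w ≤ 8 * K * μ univ := by
  let φ : ℕ → α → ℝ≥0∞ := fun n t => min (u t : ℝ≥0∞)⁻¹ n
  have hφm : ∀ n, Measurable (φ n) := fun n => by fun_prop
  have hφmono : Monotone φ := by
    intro n m h t
    exact min_le_min le_rfl (by exact_mod_cast h)
  have hφsup : ∀ t, (u t : ℝ≥0∞)⁻¹ = ⨆ n, φ n t := by
    intro t
    have : ⨆ n, φ n t = (u t : ℝ≥0∞)⁻¹ ⊓ ⨆ n : ℕ, (n : ℝ≥0∞) := by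
      rw [inf_iSup_eq]
    rw [this, ENNReal.iSup_natCast]; simp
  have hF : ∀ n, Measurable (fun p : β × α => if v p.1 ≤ u p.2 then φ n p.2 else 0) := fun n =>
    Measurable.ite (measurableSet_le (by fun_prop) (by fun_prop)) (by fun_prop) measurable_const
  have hI : ∀ x, ∫⁻ t, (if v x ≤ u t then (u t : ℝ≥0∞)⁻¹ else 0) ∂μ
      = ⨆ n, ∫⁻ t, (if v x ≤ u t then φ n t else 0) ∂μ := by
    intro x
    rw [← lintegral_iSup]
    · refine lintegral_congr fun t => ?_
      split_ifs
      · exact hφsup t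
      · simp
    · intro n; exact (hF n).comp measurable_prodMk_left
    · intro n m h t
      dsimp only
      split_ifs
      · exact hφmono h t
      · exact le_rfl
  have hGmono : ∀ x, Monotone fun n => ∫⁻ t, (if v x ≤ u t then φ n t else 0) ∂μ := by
    intro x n m h
    refine lintegral_mono fun t => ?_
    dsimp only
    split_ifs
    · exact hφmono h t
    · exact le_rfl
  have hsq : ∀ x, (∫⁻ t, (if v x ≤ u t then (u t : ℝ≥0∞)⁻¹ else 0) ∂μ) ^ 2
      = ⨆ n, (∫⁻ t, (if v x ≤ u t then φ n t else 0) ∂μ) ^ 2 := by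
    intro x
    rw [hI x]
    exact ENNReal.iSup_pow_of_ne_zero two_ne_zero _
  simp_rw [hsq]
  rw [lintegral_iSup]
  · refine iSup_le fun n => ?_
    refine hardy_upper_aux hu hv hK (hφm n) n (fun t => ?_) (fun r => ?_)
    · exact (min_le_right _ _).trans (by simp)
    · refine le_trans ?_ (h2 r)
      gcongr with t
      split_ifs
      · gcongr
        exact min_le_left _ _
      · exact le_rfl
  · intro n
    have := (hF n).lintegral_prod_right' (ν := μ)
    exact this.pow_const 2
  · intro n m h x
    exact pow_le_pow_left₀ zero_le (hGmono x h) 2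

lemma inv_add_le_ite (a b : ℝ≥0) [Decidable (a < b)] [Decidable (b ≤ a)] :
    ((a : ℝ≥0∞) + b)⁻¹ ≤
      (if a < b then (b : ℝ≥0∞)⁻¹ else 0) + if b ≤ a then (a : ℝ≥0∞)⁻¹ else 0 := by
  rcases lt_or_ge a b with h | h
  · simp only [h, if_true, not_le.2 h, if_false, add_zero]
    gcongr; simp
  · simp only [h, if_true, not_lt.2 h, if_false, zero_add]
    gcongr; simp

open Classical in
/-- Two-weight Hardy inequality for the kernel `1 / (u + v)`, tested on the constant function `1`:
both one-sided Muckenhoupt products being at most `K` suffices. -/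
lemma hardy_pos {μ : Measure α} {w : Measure β} [IsFiniteMeasure μ] [IsFiniteMeasure w]
    {u : α → ℝ≥0} {v : β → ℝ≥0} (hu : Measurable u) (hv : Measurable v) {K : ℝ≥0} (hK : 0 < K)
    (h1 : ∀ r : ℝ≥0, μ {t | u t ≤ r} *
      (∫⁻ x in {x | r < v x}, ((v x : ℝ≥0∞)⁻¹) ^ 2 ∂w) ≤ K)
    (h2 : ∀ r : ℝ≥0, w {x | v x ≤ r} *
      (∫⁻ t in {t | r ≤ u t}, ((u t : ℝ≥0∞)⁻¹) ^ 2 ∂μ) ≤ K) :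
    ∫⁻ x, (∫⁻ t, ((u t : ℝ≥0∞) + v x)⁻¹ ∂μ) ^ 2 ∂w ≤ 20 * K * μ univ := by
  have l1 := hardy_lower (μ := μ) (w := w) hu hv (K := K) (by
    intro r
    refine le_trans (le_of_eq ?_) (h1 r)
    rw [← lintegral_indicator (measurableSet_lt measurable_const hv),
      ← lintegral_indicator_one (measurableSet_le hu measurable_const)]
    simp [Set.indicator_apply])
  have l2 := hardy_upper (μ := μ) (w := w) hu hv hK (by
    intro r
    refine le_trans (le_of_eq ?_) (h2 r)
    rw [← lintegral_indicator (measurableSet_le measurable_const hu),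
      ← lintegral_indicator_one (measurableSet_le hv measurable_const)]
    simp [Set.indicator_apply])
  have hF1 : Measurable (fun p : β × α => if u p.2 < v p.1 then (v p.1 : ℝ≥0∞)⁻¹ else 0) :=
    Measurable.ite (measurableSet_lt (by fun_prop) (by fun_prop)) (by fun_prop) measurable_const
  have hF2 : Measurable (fun p : β × α => if v p.1 ≤ u p.2 then (u p.2 : ℝ≥0∞)⁻¹ else 0) :=
    Measurable.ite (measurableSet_le (by fun_prop) (by fun_prop)) (by fun_prop) measurable_const
  have add_sq : ∀ a b : ℝ≥0∞, (a + b) ^ 2 ≤ 2 * a ^ 2 + 2 * b ^ 2 := by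
    intro a b
    induction a with
    | top => simp
    | coe a =>
      induction b with
      | top => simp
      | coe b =>
        norm_cast
        rw [← NNReal.coe_le_coe]
        push_cast
        nlinarith [sq_nonneg ((a : ℝ) - b)]
  calc _ ≤ ∫⁻ x, (2 * (∫⁻ t, (if u t < v x then (v x : ℝ≥0∞)⁻¹ else 0) ∂μ) ^ 2 +
          2 * (∫⁻ t, (if v x ≤ u t then (u t : ℝ≥0∞)⁻¹ else 0) ∂μ) ^ 2) ∂w := by
        refine lintegral_mono fun x => ?_
        dsimp only
        refine le_trans ?_ (add_sq _ _)
        gcongr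
        rw [← lintegral_add_left (f := fun t => if u t < v x then (v x : ℝ≥0∞)⁻¹ else 0)
          (hF1.comp measurable_prodMk_left)]
        exact lintegral_mono fun t => inv_add_le_ite _ _
    _ ≤ 2 * (2 * K * μ univ) + 2 * (8 * K * μ univ) := by
        have m1 := hF1.lintegral_prod_right' (ν := μ)
        have m2 := hF2.lintegral_prod_right' (ν := μ)
        rw [lintegral_add_left ((m1.pow_const 2).const_mul 2),
          lintegral_const_mul _ (m1.pow_const 2), lintegral_const_mul _ (m2.pow_const 2)]
        gcongr
    _ = _ := by ring

end Hardy

/-! ### The class `𝓕` -/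

lemma InF.ico (a b : ℝ) : InF ((Ico a b).indicator 1) :=
  Submodule.subset_span ⟨a, b, rfl⟩

lemma InF.add {f g : ℝ → ℝ} (hf : InF f) (hg : InF g) : InF (f + g) := Submodule.add_mem _ hf hg

lemma InF.smul {f : ℝ → ℝ} (c : ℝ) (hf : InF f) : InF (c • f) := Submodule.smul_mem _ c hf

lemma InF.indicator {f : ℝ → ℝ} (hf : InF f) (a b : ℝ) : InF ((Ico a b).indicator f) := by
  unfold InF at hf
  induction hf using Submodule.span_induction with
  | mem f hf =>
    obtain ⟨p, q, rfl⟩ := hf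
    rw [Set.indicator_indicator, Ico_inter_Ico]
    exact InF.ico _ _
  | zero => rw [Set.indicator_zero']; exact Submodule.zero_mem _
  | add f g _ _ hf hg => rw [Set.indicator_add']; exact hf.add hg
  | smul c f _ hf =>
    have : (Ico a b).indicator (c • f) = c • (Ico a b).indicator f := by
      ext x; by_cases hx : x ∈ Ico a b <;> simp [hx]
    rw [this]; exact hf.smul c

lemma InF.measurable {f : ℝ → ℝ} (hf : InF f) : Measurable f := by
  unfold InF at hf
  induction hf using Submodule.span_induction with
  | mem f hf =>
    obtain ⟨p, q, rfl⟩ := hf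
    exact measurable_one.indicator measurableSet_Ico
  | zero => exact measurable_zero
  | add f g _ _ hf hg => exact hf.add hg
  | smul c f _ hf => exact hf.const_smul c

lemma InF.memLp {f : ℝ → ℝ} (hf : InF f) (p : ℝ≥0∞) (μ : Measure ℝ) [IsLocallyFiniteMeasure μ] :
    MemLp f p μ := by
  unfold InF at hf
  induction hf using Submodule.span_induction with
  | mem f hf =>
    obtain ⟨a, b, rfl⟩ := hf
    exact memLp_indicator_const p measurableSet_Ico 1 (Or.inr measure_Ico_lt_top.ne)
  | zero => exact MemLp.zero
  | add f g _ _ hf hg => exact hf.add hg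
  | smul c f _ hf => exact hf.const_smul c

lemma InF.exists_support {f : ℝ → ℝ} (hf : InF f) : ∃ R : ℝ, ∀ x, R ≤ |x| → f x = 0 := by
  unfold InF at hf
  induction hf using Submodule.span_induction with
  | mem f hf =>
    obtain ⟨a, b, rfl⟩ := hf
    refine ⟨|a| + |b| + 1, fun x hx => Set.indicator_of_notMem (fun h => ?_) _⟩
    have h1 := neg_abs_le a
    have h2 := le_abs_self b
    have h3 : |x| ≤ |a| + |b| := by
      rw [abs_le]; constructor <;> linarith [h.1, h.2, abs_nonneg a, abs_nonneg b]
    linarith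
  | zero => exact ⟨0, fun _ _ => rfl⟩
  | add f g _ _ hf hg =>
    obtain ⟨R, hR⟩ := hf
    obtain ⟨S, hS⟩ := hg
    exact ⟨max R S, fun x hx => by
      simp [hR x ((le_max_left _ _).trans hx), hS x ((le_max_right _ _).trans hx)]⟩
  | smul c f _ hf =>
    obtain ⟨R, hR⟩ := hf
    exact ⟨R, fun x hx => by simp [hR x hx]⟩

/-- A function of class `𝓕` splits into its parts to the left of, on, and to the right of
`[a, b)`. -/
lemma InF.exists_split {f : ℝ → ℝ} (hf : InF f) {a b : ℝ} (hab : a < b) :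
    ∃ L R : ℝ, f = (Ico L a).indicator f + (Ico a b).indicator f + (Ico b R).indicator f := by
  obtain ⟨R, hR⟩ := hf.exists_support
  refine ⟨-|R|, |R|, ?_⟩
  ext x
  simp only [Pi.add_apply, Set.indicator_apply, mem_Ico]
  by_cases h : R ≤ |x|
  · simp [hR x h]
  · push Not at h
    have h' := abs_lt.1 (h.trans_le (le_abs_self R))
    rcases lt_or_ge x a with h1 | h1
    · have h2 : ¬ b ≤ x := by linarith
      simp [h1, h1.not_ge, h'.1.le, h2]
    · rcases lt_or_ge x b with h2 | h2
      · simp [h1, h2, h1.not_gt, h2.not_ge]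
      · simp [h2, h1.not_gt, h2.not_gt, h'.2]

lemma ofReal_l2norm_sq {f : ℝ → ℝ} (hf : InF f) (μ : Measure ℝ) [IsLocallyFiniteMeasure μ] :
    ENNReal.ofReal (l2norm μ f ^ 2) = ∫⁻ x, ‖f x‖ₑ ^ 2 ∂μ := by
  unfold l2norm
  rw [Real.sq_sqrt (integral_nonneg fun x => sq_nonneg _),
    ofReal_integral_eq_lintegral_ofReal (hf.memLp 2 μ).integrable_sq
      (Filter.Eventually.of_forall fun x => sq_nonneg _)]
  refine lintegral_congr fun x => ?_
  rw [← sq_abs, ENNReal.ofReal_pow (abs_nonneg _), Real.enorm_eq_ofReal_abs]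

lemma l2norm_nonneg (μ : Measure ℝ) (f : ℝ → ℝ) : 0 ≤ l2norm μ f := Real.sqrt_nonneg _

lemma l2norm_indicator_le {f : ℝ → ℝ} (hf : InF f) (μ : Measure ℝ) [IsLocallyFiniteMeasure μ]
    (a b : ℝ) : l2norm μ ((Ico a b).indicator f) ≤ l2norm μ f := by
  refine Real.sqrt_le_sqrt (integral_mono ((hf.indicator a b).memLp 2 μ).integrable_sq
    (hf.memLp 2 μ).integrable_sq fun x => ?_)
  by_cases h : x ∈ Ico a b
  · simp [h]
  · simp [h, sq_nonneg]

/-! ### The absolute Hilbert pairing -/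

/-- The absolute Hilbert kernel `|x - y|⁻¹`, with value `∞` on the diagonal. -/
def absKernel (x y : ℝ) : ℝ≥0∞ := (ENNReal.ofReal |x - y|)⁻¹

lemma absKernel_comm (x y : ℝ) : absKernel x y = absKernel y x := by
  unfold absKernel; rw [abs_sub_comm]

lemma measurable_absKernel : Measurable (fun p : ℝ × ℝ => absKernel p.1 p.2) := by
  unfold absKernel; fun_prop

lemma measurable_absKernel_right (x : ℝ) : Measurable (fun y => absKernel x y) := by
  unfold absKernel; fun_prop

lemma enorm_inv_le_absKernel (x y : ℝ) : ‖(x - y)⁻¹‖ₑ ≤ absKernel x y := by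
  unfold absKernel
  by_cases h : x - y = 0
  · simp [h]
  · rw [enorm_inv h, Real.enorm_eq_ofReal_abs]

/-- The Hilbert pairing with absolute values inside, `∬ F(y) G(x) |x - y|⁻¹ dσ(y) dw(x)`. -/
def absPairing (σ w : Measure ℝ) (F G : ℝ → ℝ≥0∞) : ℝ≥0∞ :=
  ∫⁻ x, ∫⁻ y, F y * absKernel x y * G x ∂σ ∂w

lemma absPairing_swap (σ w : Measure ℝ) [SFinite σ] [SFinite w] {F G : ℝ → ℝ≥0∞}
    (hF : Measurable F) (hG : Measurable G) : absPairing σ w F G = absPairing w σ G F := by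
  unfold absPairing
  have hm := measurable_absKernel
  rw [lintegral_lintegral_swap]
  · refine lintegral_congr fun y => lintegral_congr fun x => ?_
    rw [absKernel_comm]; ring
  · refine Measurable.aemeasurable ?_
    exact ((hF.comp measurable_snd).mul hm).mul (hG.comp measurable_fst)

lemma enorm_hilbertPairing_le (σ w : Measure ℝ) {f g : ℝ → ℝ} (hf : Measurable f) :
    ‖hilbertPairing σ w f g‖ₑ ≤ absPairing σ w (fun y => ‖f y‖ₑ) (fun x => ‖g x‖ₑ) := by
  unfold hilbertPairing absPairing
  refine (enorm_integral_le_lintegral_enorm _).trans (lintegral_mono fun x => ?_)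
  dsimp only
  have hm : Measurable fun y => absKernel x y := measurable_absKernel_right x
  rw [enorm_mul, lintegral_mul_const (f := fun y => ‖f y‖ₑ * absKernel x y) _
    (hf.enorm.mul hm)]
  gcongr
  refine (enorm_integral_le_lintegral_enorm _).trans (lintegral_mono fun y => ?_)
  dsimp only
  rw [enorm_mul]
  gcongr
  exact enorm_inv_le_absKernel x y

lemma lintegral_mul_sq_le {α : Type*} [MeasurableSpace α] (μ : Measure α) {f g : α → ℝ≥0∞}
    (hf : Measurable f) (hg : Measurable g) :
    (∫⁻ x, f x * g x ∂μ) ^ 2 ≤ (∫⁻ x, f x ^ 2 ∂μ) * ∫⁻ x, g x ^ 2 ∂μ := by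
  have h := ENNReal.lintegral_mul_le_Lp_mul_Lq μ Real.HolderConjugate.two_two hf.aemeasurable
    hg.aemeasurable
  simp only [Pi.mul_apply, ENNReal.rpow_two] at h
  refine (pow_le_pow_left₀ zero_le h 2).trans (le_of_eq ?_)
  have e : ∀ z : ℝ≥0∞, (z ^ (1 / 2 : ℝ)) ^ 2 = z := fun z => by
    rw [← ENNReal.rpow_two, ← ENNReal.rpow_mul]; norm_num
  rw [mul_pow, e, e]

/-! ### Off-diagonal bounds from the Muckenhoupt–Poisson condition -/

/-- The Muckenhoupt–Poisson product with `|x - c|` replaced by a function `d ≥ (2/3) |x - c|`; below,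
`d` is the distance to an endpoint of `I`, on a set separated from `I` by at least its length. -/
lemma A2star.mul_lintegral_le {σ w : Measure ℝ} {A : ℝ} (h : A2star σ w A) {I S : Set ℝ}
    (hI : I.OrdConnected) (hb : Bornology.IsBounded I) {c : ℝ} (hc : (sInf I + sSup I) / 2 = c)
    (hS : MeasurableSet S) (hSI : S ⊆ Iᶜ) {d : ℝ → ℝ≥0}
    (hd : ∀ x ∈ S, 0 < |x - c| ∧ |x - c| ≤ 3 / 2 * d x) {K : ℝ≥0} (hK : 9 / 4 * A ^ 2 ≤ K) :
    σ I * ∫⁻ x in S, ((d x : ℝ≥0∞)⁻¹) ^ 2 ∂w ≤ K := by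
  have h0 := h I hI hb
  rw [hc] at h0
  have h1 : ∫⁻ x in S, ((d x : ℝ≥0∞)⁻¹) ^ 2 ∂w ≤
      ∫⁻ x in S, ENNReal.ofReal (9 / 4) * ENNReal.ofReal (((x - c) ^ 2)⁻¹) ∂w := by
    refine setLIntegral_mono' hS fun x hx => ?_
    obtain ⟨p1, p2⟩ := hd x hx
    have hd0 : 0 < (d x : ℝ) := by linarith
    rw [← ENNReal.ofReal_mul (by norm_num), ← ENNReal.ofReal_coe_nnreal,
      ← ENNReal.ofReal_inv_of_pos hd0, ← ENNReal.ofReal_pow (by positivity)]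
    refine ENNReal.ofReal_le_ofReal ?_
    rw [← sq_abs (x - c), inv_pow, ← div_eq_mul_inv, inv_eq_one_div, div_le_div_iff₀
      (by positivity) (by positivity)]
    nlinarith
  calc σ I * ∫⁻ x in S, ((d x : ℝ≥0∞)⁻¹) ^ 2 ∂w
      ≤ σ I * ∫⁻ x in S, ENNReal.ofReal (9 / 4) * ENNReal.ofReal (((x - c) ^ 2)⁻¹) ∂w := by
        gcongr
    _ = ENNReal.ofReal (9 / 4) * (σ I * ∫⁻ x in S, ENNReal.ofReal (((x - c) ^ 2)⁻¹) ∂w) := by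
        rw [lintegral_const_mul _ (by fun_prop), mul_left_comm]
    _ ≤ ENNReal.ofReal (9 / 4) * ENNReal.ofReal (A ^ 2) := by
        gcongr
        refine le_trans ?_ h0
        gcongr
    _ ≤ K := by
        rw [← ENNReal.ofReal_mul (by norm_num), ← ENNReal.ofReal_coe_nnreal]
        exact ENNReal.ofReal_le_ofReal hK

lemma absPairing_indicator_sq_le {σ w : Measure ℝ} [SFinite σ] {I J : Set ℝ}
    (hI : MeasurableSet I) (hJ : MeasurableSet J)
    {M : ℝ≥0∞} (h : ∫⁻ x in J, (∫⁻ y in I, absKernel x y ∂σ) ^ 2 ∂w ≤ M) {g : ℝ → ℝ}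
    (hg : Measurable g) :
    absPairing σ w (fun y => ‖I.indicator (1 : ℝ → ℝ) y‖ₑ) (fun x => ‖J.indicator g x‖ₑ) ^ 2
      ≤ (∫⁻ x, ‖J.indicator g x‖ₑ ^ 2 ∂w) * M := by
  have hm := measurable_absKernel
  have hm' : Measurable fun x => ∫⁻ y in I, absKernel x y ∂σ := hm.lintegral_prod_right'
  have hg' : Measurable fun x => ‖J.indicator g x‖ₑ := (hg.indicator hJ).enorm
  have e : absPairing σ w (fun y => ‖I.indicator (1 : ℝ → ℝ) y‖ₑ) (fun x => ‖J.indicator g x‖ₑ)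
      = ∫⁻ x in J, ‖J.indicator g x‖ₑ * ∫⁻ y in I, absKernel x y ∂σ ∂w := by
    unfold absPairing
    rw [← lintegral_indicator hJ]
    refine lintegral_congr fun x => ?_
    by_cases hx : x ∈ J
    · rw [Set.indicator_of_mem hx (f := fun x => ‖J.indicator g x‖ₑ * _),
        ← lintegral_const_mul (f := fun y => absKernel x y) _ (measurable_absKernel_right x),
        ← lintegral_indicator hI]
      refine lintegral_congr fun y => ?_
      by_cases hy : y ∈ I
      · simp [hy, mul_comm]
      · simp [hy]
    · simp [hx]
  rw [e]
  refine (lintegral_mul_sq_le _ hg' hm').trans ?_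
  gcongr
  exact Measure.restrict_le_self

section OffDiagonal

variable {σ w : Measure ℝ} [IsLocallyFiniteMeasure σ] [IsLocallyFiniteMeasure w] {A A' : ℝ}
  {K : ℝ≥0}

/-- For `y < b ≤ x` the kernel is `1 / (u + v)` with `u = b - y` and `v = x - b`, so the Hardy
inequality applies; its one-sided products are Muckenhoupt–Poisson products for intervals of
length `r` with `b` as an endpoint. -/
lemma offdiag_right (hA : A2star σ w A) (hA' : A2star w σ A') (hK : 0 < K)
    (hKA : 9 / 4 * A ^ 2 ≤ K) (hKA' : 9 / 4 * A' ^ 2 ≤ K) (a b c : ℝ) :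
    ∫⁻ x in Ico b c, (∫⁻ y in Ico a b, absKernel x y ∂σ) ^ 2 ∂w ≤ 20 * K * σ (Ico a b) := by
  have : IsFiniteMeasure (σ.restrict (Ico a b)) := ⟨by simp [measure_Ico_lt_top]⟩
  have : IsFiniteMeasure (w.restrict (Ico b c)) := ⟨by simp [measure_Ico_lt_top]⟩
  have hu : Measurable fun y : ℝ => (b - y).toNNReal := by fun_prop
  have hv : Measurable fun x : ℝ => (x - b).toNNReal := by fun_prop
  have key := hardy_pos (μ := σ.restrict (Ico a b)) (w := w.restrict (Ico b c))
    (u := fun y => (b - y).toNNReal) (v := fun x => (x - b).toNNReal) hu hv hK ?_ ?_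
  · rw [Measure.restrict_apply_univ] at key
    refine le_trans (le_of_eq ?_) key
    refine setLIntegral_congr_fun measurableSet_Ico fun x hx => ?_
    congr 1
    refine setLIntegral_congr_fun measurableSet_Ico fun y hy => ?_
    unfold absKernel
    have e1 : 0 ≤ b - y := by linarith [hy.2]
    have e2 : 0 ≤ x - b := by linarith [hx.1]
    rw [← ENNReal.ofReal, ← ENNReal.ofReal, ← ENNReal.ofReal_add e1 e2, abs_of_nonneg (by linarith)]
    congr 2
    ring
  · intro r
    rw [Measure.restrict_restrict (measurableSet_lt measurable_const hv),
      Measure.restrict_apply (measurableSet_le hu measurable_const)]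
    rcases eq_or_ne r 0 with rfl | hr
    · have : {t : ℝ | (b - t).toNNReal ≤ 0} ∩ Ico a b = ∅ := by
        ext t
        simp only [mem_inter_iff, mem_ofPred_eq, nonpos_iff_eq_zero, Real.toNNReal_eq_zero, mem_Ico,
          mem_empty_iff_false, iff_false]
        intro h; linarith [h.1, h.2.2]
      rw [this]; simp
    · have hr0 : (0 : ℝ) < r := by positivity
      refine le_trans ?_ (hA.mul_lintegral_le (I := Ico (b - r) b)
        (S := {x | r < (x - b).toNNReal} ∩ Ico b c)
        ordConnected_Ico (Metric.isBounded_Ico _ _) (c := b - r / 2)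
        (d := fun x => (x - b).toNNReal) ?_
        ((measurableSet_lt measurable_const hv).inter measurableSet_Ico) ?_ ?_ hKA)
      · gcongr
        rintro y ⟨hy1, hy2⟩
        rw [mem_ofPred_eq, Real.toNNReal_le_iff_le_coe] at hy1
        exact ⟨by linarith, hy2.2⟩
      · rw [csInf_Ico (by linarith), csSup_Ico (by linarith)]; ring
      · rintro x ⟨-, hx⟩ h
        linarith [h.2, hx.1]
      · rintro x ⟨hx1, hx⟩
        rw [mem_ofPred_eq, Real.lt_toNNReal_iff_coe_lt] at hx1
        rw [Real.coe_toNNReal _ (by linarith [hx.1]), abs_of_nonneg (by linarith)]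
        constructor <;> linarith
  · intro r
    have hr0 : (0 : ℝ) ≤ r := r.2
    rw [Measure.restrict_restrict (measurableSet_le measurable_const hu),
      Measure.restrict_apply (measurableSet_le hv measurable_const)]
    refine le_trans ?_ (hA'.mul_lintegral_le (I := Icc b (b + r))
      (S := {x | r ≤ (b - x).toNNReal} ∩ Ico a b)
      ordConnected_Icc (Metric.isBounded_Icc _ _) (c := b + r / 2)
      (d := fun x => (b - x).toNNReal) ?_
      ((measurableSet_le measurable_const hu).inter measurableSet_Ico) ?_ ?_ hKA')
    · gcongr
      rintro y ⟨hy1, hy2⟩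
      rw [mem_ofPred_eq, Real.toNNReal_le_iff_le_coe] at hy1
      exact ⟨hy2.1, by linarith⟩
    · rw [csInf_Icc (by linarith), csSup_Icc (by linarith)]; ring
    · rintro x ⟨-, hx⟩ h
      linarith [h.1, hx.2]
    · rintro x ⟨hx1, hx⟩
      have hx2 : 0 ≤ b - x := by linarith [hx.2]
      rw [mem_ofPred_eq, Real.le_toNNReal_iff_coe_le hx2] at hx1
      rw [Real.coe_toNNReal _ hx2, abs_of_neg (by linarith [hx.2])]
      constructor <;> linarith [hx.2]

/-- The mirror image of `offdiag_right`, with common endpoint `a`. -/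
lemma offdiag_left (hA : A2star σ w A) (hA' : A2star w σ A') (hK : 0 < K)
    (hKA : 9 / 4 * A ^ 2 ≤ K) (hKA' : 9 / 4 * A' ^ 2 ≤ K) (a b c : ℝ) :
    ∫⁻ x in Ico c a, (∫⁻ y in Ico a b, absKernel x y ∂σ) ^ 2 ∂w ≤ 20 * K * σ (Ico a b) := by
  have : IsFiniteMeasure (σ.restrict (Ico a b)) := ⟨by simp [measure_Ico_lt_top]⟩
  have : IsFiniteMeasure (w.restrict (Ico c a)) := ⟨by simp [measure_Ico_lt_top]⟩
  have hu : Measurable fun y : ℝ => (y - a).toNNReal := by fun_prop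
  have hv : Measurable fun x : ℝ => (a - x).toNNReal := by fun_prop
  have key := hardy_pos (μ := σ.restrict (Ico a b)) (w := w.restrict (Ico c a))
    (u := fun y => (y - a).toNNReal) (v := fun x => (a - x).toNNReal) hu hv hK ?_ ?_
  · rw [Measure.restrict_apply_univ] at key
    refine le_trans (le_of_eq ?_) key
    refine setLIntegral_congr_fun measurableSet_Ico fun x hx => ?_
    congr 1
    refine setLIntegral_congr_fun measurableSet_Ico fun y hy => ?_
    unfold absKernel
    have e1 : 0 ≤ y - a := by linarith [hy.1]
    have e2 : 0 ≤ a - x := by linarith [hx.2]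
    rw [← ENNReal.ofReal, ← ENNReal.ofReal, ← ENNReal.ofReal_add e1 e2, abs_of_nonpos (by linarith)]
    congr 2
    ring
  · intro r
    have hr0 : (0 : ℝ) ≤ r := r.2
    rw [Measure.restrict_restrict (measurableSet_lt measurable_const hv),
      Measure.restrict_apply (measurableSet_le hu measurable_const)]
    refine le_trans ?_ (hA.mul_lintegral_le (I := Icc a (a + r))
      (S := {x | r < (a - x).toNNReal} ∩ Ico c a)
      ordConnected_Icc (Metric.isBounded_Icc _ _) (c := a + r / 2)
      (d := fun x => (a - x).toNNReal) ?_
      ((measurableSet_lt measurable_const hv).inter measurableSet_Ico) ?_ ?_ hKA)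
    · gcongr
      rintro y ⟨hy1, hy2⟩
      rw [mem_ofPred_eq, Real.toNNReal_le_iff_le_coe] at hy1
      exact ⟨hy2.1, by linarith⟩
    · rw [csInf_Icc (by linarith), csSup_Icc (by linarith)]; ring
    · rintro x ⟨-, hx⟩ h
      linarith [h.1, hx.2]
    · rintro x ⟨hx1, hx⟩
      rw [mem_ofPred_eq, Real.lt_toNNReal_iff_coe_lt] at hx1
      rw [Real.coe_toNNReal _ (by linarith [hx.2]), abs_of_neg (by linarith [hx.2])]
      constructor <;> linarith [hx.2]
  · intro r
    rw [Measure.restrict_restrict (measurableSet_le measurable_const hu),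
      Measure.restrict_apply (measurableSet_le hv measurable_const)]
    rcases eq_or_ne r 0 with rfl | hr
    · have : {t : ℝ | (a - t).toNNReal ≤ 0} ∩ Ico c a = ∅ := by
        ext t
        simp only [mem_inter_iff, mem_ofPred_eq, nonpos_iff_eq_zero, Real.toNNReal_eq_zero, mem_Ico,
          mem_empty_iff_false, iff_false]
        intro h; linarith [h.1, h.2.2]
      rw [this]; simp
    · have hr0 : (0 : ℝ) < r := by positivity
      refine le_trans ?_ (hA'.mul_lintegral_le (I := Ico (a - r) a)
        (S := {x | r ≤ (x - a).toNNReal} ∩ Ico a b)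
        ordConnected_Ico (Metric.isBounded_Ico _ _) (c := a - r / 2)
        (d := fun x => (x - a).toNNReal) ?_
        ((measurableSet_le measurable_const hu).inter measurableSet_Ico) ?_ ?_ hKA')
      · gcongr
        rintro y ⟨hy1, hy2⟩
        rw [mem_ofPred_eq, Real.toNNReal_le_iff_le_coe] at hy1
        exact ⟨by linarith, hy2.2⟩
      · rw [csInf_Ico (by linarith), csSup_Ico (by linarith)]; ring
      · rintro x ⟨-, hx⟩ h
        linarith [h.2, hx.1]
      · rintro x ⟨hx1, hx⟩
        have hx2 : 0 ≤ x - a := by linarith [hx.1]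
        rw [mem_ofPred_eq, Real.le_toNNReal_iff_coe_le hx2] at hx1
        rw [Real.coe_toNNReal _ hx2, abs_of_nonneg (by linarith)]
        constructor <;> linarith

/-- An interval `J` adjacent to `[a, b)`. -/
def AdjacentTo (a b : ℝ) (J : Set ℝ) : Prop := (∃ c, J = Ico b c) ∨ ∃ c, J = Ico c a

lemma absPairing_adjacent_le (hA : A2star σ w A) (hA' : A2star w σ A') (hA0 : 0 ≤ A)
    (hA0' : 0 ≤ A') {a b : ℝ} {J : Set ℝ} (hJ : AdjacentTo a b J) {g : ℝ → ℝ} (hg : InF g) :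
    absPairing σ w (fun y => ‖(Ico a b).indicator (1 : ℝ → ℝ) y‖ₑ) (fun x => ‖J.indicator g x‖ₑ)
      ≤ ENNReal.ofReal (7 * (A + A') * √(σ (Ico a b)).toReal * l2norm w g) := by
  -- The Hardy inequality needs a positive constant; `ε` covers the case `A = A' = 0`.
  have hε : ∀ ε > 0, absPairing σ w (fun y => ‖(Ico a b).indicator (1 : ℝ → ℝ) y‖ₑ)
      (fun x => ‖J.indicator g x‖ₑ)
      ≤ ENNReal.ofReal (7 * (A + A' + ε) * √(σ (Ico a b)).toReal * l2norm w g) := by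
    intro ε hε
    set K : ℝ≥0 := (9 / 4 * (A + A' + ε) ^ 2).toNNReal with hKdef
    have hKc : (K : ℝ) = 9 / 4 * (A + A' + ε) ^ 2 := Real.coe_toNNReal _ (by positivity)
    have hK : 0 < K := by rw [← NNReal.coe_pos, hKc]; positivity
    have hKA : 9 / 4 * A ^ 2 ≤ K := by
      rw [hKc]; gcongr; linarith
    have hKA' : 9 / 4 * A' ^ 2 ≤ K := by
      rw [hKc]; gcongr; linarith
    have hJm : MeasurableSet J := by
      rcases hJ with ⟨c, rfl⟩ | ⟨c, rfl⟩ <;> exact measurableSet_Ico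
    have hM : ∫⁻ x in J, (∫⁻ y in Ico a b, absKernel x y ∂σ) ^ 2 ∂w
        ≤ 20 * K * σ (Ico a b) := by
      rcases hJ with ⟨c, rfl⟩ | ⟨c, rfl⟩
      · exact offdiag_right hA hA' hK hKA hKA' a b c
      · exact offdiag_left hA hA' hK hKA hKA' a b c
    have h := absPairing_indicator_sq_le measurableSet_Ico hJm hM hg.measurable
    rw [← ENNReal.pow_le_pow_left_iff two_ne_zero]
    refine h.trans ?_
    have hgle : ∫⁻ x, ‖J.indicator g x‖ₑ ^ 2 ∂w ≤ ENNReal.ofReal (l2norm w g ^ 2) := by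
      rw [ofReal_l2norm_sq hg]
      gcongr with x
      exact enorm_indicator_le_enorm_self _ _
    refine (mul_le_mul_left hgle _).trans ?_
    have hσ : σ (Ico a b) = ENNReal.ofReal ((σ (Ico a b)).toReal) :=
      (ENNReal.ofReal_toReal measure_Ico_lt_top.ne).symm
    rw [hσ, ← ENNReal.ofReal_coe_nnreal, ← ENNReal.ofReal_pow
      (by have := l2norm_nonneg w g; positivity), ENNReal.toReal_ofReal ENNReal.toReal_nonneg,
      show (20 : ℝ≥0∞) = ENNReal.ofReal 20 by simp, ← ENNReal.ofReal_mul (by norm_num),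
      ← ENNReal.ofReal_mul (by positivity), ← ENNReal.ofReal_mul (by positivity), hKc]
    refine ENNReal.ofReal_le_ofReal ?_
    rw [mul_pow, mul_pow, Real.sq_sqrt ENNReal.toReal_nonneg]
    have : 0 ≤ (A + A' + ε) ^ 2 * (σ (Ico a b)).toReal * l2norm w g ^ 2 := by positivity
    nlinarith
  have ht : Filter.Tendsto
      (fun ε : ℝ => ENNReal.ofReal (7 * (A + A' + ε) * √(σ (Ico a b)).toReal * l2norm w g))
      (nhdsWithin 0 (Ioi 0))
      (nhds (ENNReal.ofReal (7 * (A + A' + 0) * √(σ (Ico a b)).toReal * l2norm w g))) := by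
    refine Filter.Tendsto.mono_left (Continuous.tendsto ?_ 0) nhdsWithin_le_nhds
    exact ENNReal.continuous_ofReal.comp (by fun_prop)
  rw [add_zero] at ht
  refine ge_of_tendsto ht ?_
  filter_upwards [self_mem_nhdsWithin] with ε h using hε ε h

end OffDiagonal

/-! ### Local testing and the Muckenhoupt–Poisson condition imply global testing -/

lemma AdjacentTo.disjointlySupported {a b : ℝ} {J : Set ℝ} (hJ : AdjacentTo a b J) (f g : ℝ → ℝ) :
    DisjointlySupported ((Ico a b).indicator f) (J.indicator g) := by
  refine ⟨Ico a b, J, ordConnected_Ico, ?_, ?_, support_indicator_subset,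
    support_indicator_subset⟩
  · rcases hJ with ⟨c, rfl⟩ | ⟨c, rfl⟩ <;> exact ordConnected_Ico
  · rw [Set.disjoint_left]
    rcases hJ with ⟨c, rfl⟩ | ⟨c, rfl⟩
    · intro x h1 h2; exact absurd h1.2 (not_lt.2 h2.1)
    · intro x h1 h2; exact absurd h2.2 (not_lt.2 h1.1)

lemma DisjointlySupported.symm {f g : ℝ → ℝ} (h : DisjointlySupported f g) :
    DisjointlySupported g f := by
  obtain ⟨I, J, h1, h2, h3, h4, h5⟩ := h
  exact ⟨J, I, h2, h1, h3.symm, h5, h4⟩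

lemma abs_le_of_enorm_le {x y : ℝ} (hy : 0 ≤ y) (h : ‖x‖ₑ ≤ ENNReal.ofReal y) : |x| ≤ y := by
  rwa [Real.enorm_eq_ofReal_abs, ENNReal.ofReal_le_ofReal_iff hy] at h

section Global

variable {σ w : Measure ℝ} [IsLocallyFiniteMeasure σ] [IsLocallyFiniteMeasure w]
  {B : (ℝ → ℝ) → (ℝ → ℝ) → ℝ}

lemma globalTesting_of_local (hB : BilinearOnF B) (hH : HilbertKernelProp σ w B) {H H' A A' : ℝ}
    (hA0 : 0 ≤ A) (hA0' : 0 ≤ A') (hL : LocalTesting σ w B H H') (hA : A2star σ w A)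
    (hA' : A2star w σ A') :
    GlobalTesting σ w B (H + 14 * (A + A')) (H' + 14 * (A + A')) := by
  obtain ⟨hBa, -, hBa', -⟩ := hB
  constructor
  · intro a b g hab hg
    obtain ⟨L, R, hs⟩ := hg.exists_split hab
    have h1 := hL.1 a b g hab hg
    have hn := l2norm_nonneg w g
    have h2 : ∀ c d, AdjacentTo a b (Ico c d) →
        |B ((Ico a b).indicator 1) ((Ico c d).indicator g)| ≤
          7 * (A + A') * √(σ (Ico a b)).toReal * l2norm w g := by
      intro c d hJ
      rw [hH _ _ (InF.ico a b) (hg.indicator c d) (hJ.disjointlySupported 1 g)]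
      exact abs_le_of_enorm_le (by positivity)
        ((enorm_hilbertPairing_le σ w (InF.ico a b).measurable).trans
          (absPairing_adjacent_le hA hA' hA0 hA0' hJ hg))
    have hl := h2 L a (Or.inr ⟨L, rfl⟩)
    have hr := h2 b R (Or.inl ⟨R, rfl⟩)
    have e : B ((Ico a b).indicator 1) g = B ((Ico a b).indicator 1) ((Ico L a).indicator g) +
        B ((Ico a b).indicator 1) ((Ico a b).indicator g) +
        B ((Ico a b).indicator 1) ((Ico b R).indicator g) := by
      conv_lhs => rw [hs]
      rw [hBa' _ _ _ (InF.ico a b) ((hg.indicator _ _).add (hg.indicator _ _)) (hg.indicator _ _),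
        hBa' _ _ _ (InF.ico a b) (hg.indicator _ _) (hg.indicator _ _)]
    rw [e]
    refine (abs_add_three _ _ _).trans ?_
    linarith
  · intro a b f hab hf
    obtain ⟨L, R, hs⟩ := hf.exists_split hab
    have h1 := hL.2 a b f hab hf
    have hn := l2norm_nonneg σ f
    have h2 : ∀ c d, AdjacentTo a b (Ico c d) →
        |B ((Ico c d).indicator f) ((Ico a b).indicator 1)| ≤
          7 * (A' + A) * √(w (Ico a b)).toReal * l2norm σ f := by
      intro c d hJ
      rw [hH _ _ (hf.indicator c d) (InF.ico a b) (hJ.disjointlySupported 1 f).symm]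
      refine abs_le_of_enorm_le (by positivity)
        ((enorm_hilbertPairing_le σ w (hf.indicator c d).measurable).trans ?_)
      rw [absPairing_swap _ _ (hf.indicator c d).measurable.enorm (InF.ico a b).measurable.enorm]
      exact absPairing_adjacent_le hA' hA hA0' hA0 hJ hf
    have hl := h2 L a (Or.inr ⟨L, rfl⟩)
    have hr := h2 b R (Or.inl ⟨R, rfl⟩)
    have e : B f ((Ico a b).indicator 1) = B ((Ico L a).indicator f) ((Ico a b).indicator 1) +
        B ((Ico a b).indicator f) ((Ico a b).indicator 1) +
        B ((Ico b R).indicator f) ((Ico a b).indicator 1) := by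
      conv_lhs => rw [hs]
      rw [hBa _ _ _ ((hf.indicator _ _).add (hf.indicator _ _)) (hf.indicator _ _) (InF.ico a b),
        hBa _ _ _ (hf.indicator _ _) (hf.indicator _ _) (InF.ico a b)]
    rw [e]
    refine (abs_add_three _ _ _).trans ?_
    linarith

/-! ### Global testing implies local testing and the Muckenhoupt–Poisson condition -/

lemma localTesting_of_global {Hg Hg' : ℝ} (h0 : 0 ≤ Hg) (h0' : 0 ≤ Hg')
    (h : GlobalTesting σ w B Hg Hg') : LocalTesting σ w B Hg Hg' := by
  constructor
  · intro a b g hab hg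
    refine (h.1 a b _ hab (hg.indicator a b)).trans ?_
    gcongr
    exact l2norm_indicator_le hg w a b
  · intro a b f hab hf
    refine (h.2 a b _ hab (hf.indicator a b)).trans ?_
    gcongr
    exact l2norm_indicator_le hf σ a b

/-- For nonnegative functions with supports at positive distance, on a fixed side (`e = ±1`) of each
other, there is no cancellation in the Hilbert pairing. -/
lemma absPairing_le_enorm_hilbertPairing {f g : ℝ → ℝ} (hf : InF f) (hg : InF g)
    (hf0 : ∀ x, 0 ≤ f x) (hg0 : ∀ x, 0 ≤ g x) {e δ : ℝ} (he : e = 1 ∨ e = -1) (hδ : 0 < δ)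
    (hsep : ∀ x y, f y ≠ 0 → g x ≠ 0 → δ ≤ e * (x - y)) :
    absPairing σ w (fun y => ‖f y‖ₑ) (fun x => ‖g x‖ₑ) ≤ ‖hilbertPairing σ w f g‖ₑ := by
  set G : ℝ → ℝ → ℝ := fun x y => e * (f y * (x - y)⁻¹ * g x) with hG
  have hfm := hf.measurable
  have hgm := hg.measurable
  have hee : e * e = 1 := by rcases he with rfl | rfl <;> norm_num
  have hfi : Integrable f σ := memLp_one_iff_integrable.1 (hf.memLp 1 σ)
  have hgi : Integrable g w := memLp_one_iff_integrable.1 (hg.memLp 1 w)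
  have hGm : Measurable (Function.uncurry G) := by
    simp only [hG, Function.uncurry_def]; fun_prop
  have hinv : ∀ x y, f y ≠ 0 → g x ≠ 0 → e * (x - y)⁻¹ = |x - y|⁻¹ ∧ δ ≤ |x - y| := by
    intro x y hy hx
    have h := hsep x y hy hx
    have h' : e * (x - y) = |x - y| := by
      rcases he with rfl | rfl
      · rw [one_mul] at h ⊢; rw [abs_of_pos (by linarith)]
      · rw [abs_of_neg (by linarith)]; ring
    refine ⟨?_, h' ▸ h⟩
    rw [← h']
    rcases he with rfl | rfl <;> simp [neg_inv]
  have hG0 : ∀ x y, 0 ≤ G x y := by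
    intro x y
    by_cases hy : f y = 0
    · simp [hG, hy]
    by_cases hx : g x = 0
    · simp [hG, hx]
    have e1 : G x y = f y * (e * (x - y)⁻¹) * g x := by simp only [hG]; ring
    rw [e1, (hinv x y hy hx).1]
    have := hf0 y; have := hg0 x
    positivity
  have hGle : ∀ x y, G x y ≤ f y * (δ⁻¹ * g x) := by
    intro x y
    by_cases hy : f y = 0
    · simp [hG, hy]
    by_cases hx : g x = 0
    · simp [hG, hx]
    have e1 : G x y = f y * ((e * (x - y)⁻¹) * g x) := by simp only [hG]; ring
    obtain ⟨i1, i2⟩ := hinv x y hy hx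
    rw [e1, i1]
    have := hf0 y; have := hg0 x
    gcongr
  have hGe : ∀ x y, ENNReal.ofReal (G x y) = ‖f y‖ₑ * absKernel x y * ‖g x‖ₑ := by
    intro x y
    by_cases hy : f y = 0
    · simp [hG, hy]
    by_cases hx : g x = 0
    · simp [hG, hx]
    obtain ⟨i1, i2⟩ := hinv x y hy hx
    have e1 : G x y = f y * (e * (x - y)⁻¹) * g x := by simp only [hG]; ring
    have hpos : 0 < |x - y| := by linarith
    have := hf0 y
    rw [e1, i1, ENNReal.ofReal_mul (by positivity), ENNReal.ofReal_mul (hf0 y),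
      ENNReal.ofReal_inv_of_pos hpos, Real.enorm_of_nonneg (hf0 y), Real.enorm_of_nonneg (hg0 x)]
    rfl
  have hGi : ∀ x, Integrable (G x) σ := by
    intro x
    refine (hfi.mul_const (δ⁻¹ * g x)).mono' ?_ (Filter.Eventually.of_forall fun y => ?_)
    · exact (hGm.comp measurable_prodMk_left).aestronglyMeasurable
    · rw [Real.norm_of_nonneg (hG0 x y)]; exact hGle x y
  have hGGi : Integrable (fun x => ∫ y, G x y ∂σ) w := by
    refine (hgi.const_mul ((∫ y, f y ∂σ) * δ⁻¹)).mono' ?_ (Filter.Eventually.of_forall fun x => ?_)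
    · exact hGm.stronglyMeasurable.integral_prod_right.aestronglyMeasurable
    · rw [Real.norm_of_nonneg (integral_nonneg (hG0 x)), mul_assoc, ← integral_mul_const]
      exact integral_mono (hGi x) (hfi.mul_const _) (hGle x)
  have ehp : e * hilbertPairing σ w f g = ∫ x, ∫ y, G x y ∂σ ∂w := by
    unfold hilbertPairing
    rw [← integral_const_mul]
    refine integral_congr_ae (Filter.Eventually.of_forall fun x => ?_)
    simp only [hG]
    rw [integral_const_mul, integral_mul_const]
  have eabs : ‖hilbertPairing σ w f g‖ₑ = ‖e * hilbertPairing σ w f g‖ₑ := by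
    rcases he with rfl | rfl <;> simp
  rw [eabs, ehp, Real.enorm_of_nonneg (integral_nonneg fun x => integral_nonneg (hG0 x)),
    ofReal_integral_eq_lintegral_ofReal hGGi
      (Filter.Eventually.of_forall fun x => integral_nonneg (hG0 x))]
  unfold absPairing
  refine lintegral_mono fun x => ?_
  dsimp only
  rw [ofReal_integral_eq_lintegral_ofReal (hGi x) (Filter.Eventually.of_forall (hG0 x))]
  exact lintegral_mono fun y => (hGe x y).ge

end Global

/-- Testing of the absolute pairing on an interval against nonnegative functions supported at
positive distance to one side of it. -/
def SeparatedTesting (σ w : Measure ℝ) (H : ℝ) : Prop :=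
  ∀ (p q : ℝ) (g : ℝ → ℝ) (δ : ℝ), p < q → InF g → (∀ x, 0 ≤ g x) → 0 < δ →
    ((∀ x, g x ≠ 0 → q + δ ≤ x) ∨ (∀ x, g x ≠ 0 → x ≤ p - δ)) →
    absPairing σ w (fun y => ‖(Ico p q).indicator (1 : ℝ → ℝ) y‖ₑ) (fun x => ‖g x‖ₑ) ≤
      ENNReal.ofReal (H * √(σ (Ico p q)).toReal * l2norm w g)

lemma lintegral_ofReal_inv_sq_le {w : Measure ℝ} {K S : Set ℝ} (hK : MeasurableSet K) (hKS : K ⊆ S)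
    {d e : ℝ → ℝ} {m : ℝ} (hm : 0 < m) (he : Measurable e) (hde : ∀ x ∈ K, 0 < e x ∧ e x ≤ m * |d x|) :
    ∫⁻ x in K, ENNReal.ofReal ((d x ^ 2)⁻¹) ∂w ≤
      ENNReal.ofReal (m ^ 2) * ∫⁻ x in S, ENNReal.ofReal ((e x ^ 2)⁻¹) ∂w := by
  rw [← lintegral_const_mul _ (by fun_prop)]
  refine le_trans (setLIntegral_mono' hK fun x hx => ?_) (lintegral_mono_set hKS)
  obtain ⟨h1, h2⟩ := hde x hx
  rw [← ENNReal.ofReal_mul (by positivity)]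
  refine ENNReal.ofReal_le_ofReal ?_
  have h3 : 0 < |d x| := by
    by_contra hc
    push Not at hc
    nlinarith
  rw [← sq_abs (d x), ← div_eq_mul_inv, inv_eq_one_div, div_le_div_iff₀ (by positivity)
    (by positivity), one_mul, ← mul_pow]
  gcongr

section Separated

variable {σ w : Measure ℝ} [IsLocallyFiniteMeasure σ] [IsLocallyFiniteMeasure w]
  {B : (ℝ → ℝ) → (ℝ → ℝ) → ℝ} {Hg Hg' H : ℝ}

lemma indicator_one_nonneg (I : Set ℝ) (x : ℝ) : 0 ≤ I.indicator (1 : ℝ → ℝ) x :=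
  Set.indicator_nonneg (fun _ _ => zero_le_one) x

lemma separatedTesting (hH : HilbertKernelProp σ w B) (h : GlobalTesting σ w B Hg Hg') :
    SeparatedTesting σ w Hg := by
  intro p q g δ hpq hg hg0 hδ hsep
  have key : DisjointlySupported ((Ico p q).indicator 1) g →
      ∀ e : ℝ, (e = 1 ∨ e = -1) → (∀ x y, (Ico p q).indicator (1 : ℝ → ℝ) y ≠ 0 → g x ≠ 0 →
        δ ≤ e * (x - y)) → absPairing σ w (fun y => ‖(Ico p q).indicator (1 : ℝ → ℝ) y‖ₑ)
        (fun x => ‖g x‖ₑ) ≤ ENNReal.ofReal (Hg * √(σ (Ico p q)).toReal * l2norm w g) := by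
    intro hd e he hs
    refine (absPairing_le_enorm_hilbertPairing (InF.ico p q) hg (indicator_one_nonneg _) hg0 he hδ
      hs).trans ?_
    rw [← hH _ _ (InF.ico p q) hg hd, Real.enorm_eq_ofReal_abs]
    exact ENNReal.ofReal_le_ofReal (h.1 p q g hpq hg)
  rcases hsep with hs | hs
  · refine key ⟨Ico p q, Ici q, ordConnected_Ico, ordConnected_Ici, ?_, support_indicator_subset,
      fun x hx => ?_⟩ 1 (Or.inl rfl) fun x y hy hx => ?_
    · rw [Set.disjoint_left]; intro x h1 h2; exact absurd h1.2 (not_lt.2 h2)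
    · have := hs x hx; rw [mem_Ici]; linarith
    · have h1 := hs x hx
      have h2 := Set.mem_of_indicator_ne_zero hy
      linarith [h2.2]
  · refine key ⟨Ico p q, Iio p, ordConnected_Ico, ordConnected_Iio, ?_, support_indicator_subset,
      fun x hx => ?_⟩ (-1) (Or.inr rfl) fun x y hy hx => ?_
    · rw [Set.disjoint_left]; intro x h1 h2; exact absurd h2 (not_lt.2 h1.1)
    · have := hs x hx; rw [mem_Iio]; linarith
    · have h1 := hs x hx
      have h2 := Set.mem_of_indicator_ne_zero hy
      linarith [h2.1]

lemma separatedTesting_dual (hH : HilbertKernelProp σ w B) (h : GlobalTesting σ w B Hg Hg') :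
    SeparatedTesting w σ Hg' := by
  intro p q g δ hpq hg hg0 hδ hsep
  have key : DisjointlySupported g ((Ico p q).indicator 1) →
      ∀ e : ℝ, (e = 1 ∨ e = -1) → (∀ x y, g y ≠ 0 → (Ico p q).indicator (1 : ℝ → ℝ) x ≠ 0 →
        δ ≤ e * (x - y)) → absPairing w σ (fun y => ‖(Ico p q).indicator (1 : ℝ → ℝ) y‖ₑ)
        (fun x => ‖g x‖ₑ) ≤ ENNReal.ofReal (Hg' * √(w (Ico p q)).toReal * l2norm σ g) := by
    intro hd e he hs
    rw [absPairing_swap _ _ (InF.ico p q).measurable.enorm hg.measurable.enorm]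
    refine (absPairing_le_enorm_hilbertPairing hg (InF.ico p q) hg0 (indicator_one_nonneg _) he hδ
      hs).trans ?_
    rw [← hH _ _ hg (InF.ico p q) hd, Real.enorm_eq_ofReal_abs]
    refine ENNReal.ofReal_le_ofReal ((h.2 p q g hpq hg).trans (le_of_eq (by ring)))
  rcases hsep with hs | hs
  · refine key ⟨Ici q, Ico p q, ordConnected_Ici, ordConnected_Ico, ?_, fun x hx => ?_,
      support_indicator_subset⟩ (-1) (Or.inr rfl) fun x y hy hx => ?_
    · rw [Set.disjoint_left]; intro x h1 h2; exact absurd h2.2 (not_lt.2 h1)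
    · have := hs x hx; rw [mem_Ici]; linarith
    · have h1 := hs y hy
      have h2 := Set.mem_of_indicator_ne_zero hx
      linarith [h2.2]
  · refine key ⟨Iio p, Ico p q, ordConnected_Iio, ordConnected_Ico, ?_, fun x hx => ?_,
      support_indicator_subset⟩ 1 (Or.inl rfl) fun x y hy hx => ?_
    · rw [Set.disjoint_left]; intro x h1 h2; exact absurd h1 (not_lt.2 h2.1)
    · have := hs x hx; rw [mem_Iio]; linarith
    · have h1 := hs y hy
      have h2 := Set.mem_of_indicator_ne_zero hx
      linarith [h2.1]

/-- If the test function `g` is comparable to `1 / d` on its support `S` and `|x - y| ≤ d x` for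
`y ∈ [p, q)`, testing bounds `σ[p, q) ∫_S d⁻² dw`. -/
lemma SeparatedTesting.mul_lintegral_le (h : SeparatedTesting σ w H) (hH : 0 ≤ H) {p q δ : ℝ}
    (hpq : p < q) {g : ℝ → ℝ} (hg : InF g) (hg0 : ∀ x, 0 ≤ g x) (hδ : 0 < δ)
    (hsep : (∀ x, g x ≠ 0 → q + δ ≤ x) ∨ (∀ x, g x ≠ 0 → x ≤ p - δ)) {S : Set ℝ}
    (hS : MeasurableSet S) {d : ℝ → ℝ} (hgS : ∀ x, g x ≠ 0 → x ∈ S)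
    (hd : ∀ x ∈ S, 0 < d x ∧ ∀ y ∈ Ico p q, |x - y| ≤ d x)
    (hgd : ∀ x ∈ S, (d x)⁻¹ ≤ g x ∧ g x ≤ 2 * (d x)⁻¹) :
    σ (Ico p q) * ∫⁻ x in S, ENNReal.ofReal (((d x) ^ 2)⁻¹) ∂w ≤ ENNReal.ofReal (4 * H ^ 2) := by
  have h0 := h p q g δ hpq hg hg0 hδ hsep
  have hn := l2norm_nonneg w g
  set n := l2norm w g with hndef
  have hn2 : ENNReal.ofReal (n ^ 2) = ∫⁻ x, ‖g x‖ₑ ^ 2 ∂w := ofReal_l2norm_sq hg w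
  set a := (σ (Ico p q)).toReal with ha
  have ha0 : 0 ≤ a := ENNReal.toReal_nonneg
  have haσ : σ (Ico p q) = ENNReal.ofReal a := (ENNReal.ofReal_toReal measure_Ico_lt_top.ne).symm
  have lower : ENNReal.ofReal (a * 2⁻¹ * n ^ 2) ≤
      absPairing σ w (fun y => ‖(Ico p q).indicator (1 : ℝ → ℝ) y‖ₑ) (fun x => ‖g x‖ₑ) := by
    rw [ENNReal.ofReal_mul (by positivity), hn2, ← lintegral_const_mul _
      (hg.measurable.enorm.pow_const 2)]
    unfold absPairing
    refine lintegral_mono fun x => ?_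
    dsimp only
    by_cases hx : g x = 0
    · simp [hx]
    have hxS := hgS x hx
    have hgx := hg0 x
    obtain ⟨hd0, hdy⟩ := hd x hxS
    calc ENNReal.ofReal (a * 2⁻¹) * ‖g x‖ₑ ^ 2
        = ∫⁻ y in Ico p q, ENNReal.ofReal (2⁻¹ * g x) * ‖g x‖ₑ ∂σ := by
          rw [setLIntegral_const, haσ, Real.enorm_of_nonneg hgx,
            ← ENNReal.ofReal_pow hgx, ← ENNReal.ofReal_mul (by positivity),
            ← ENNReal.ofReal_mul (by positivity), ← ENNReal.ofReal_mul (by positivity)]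
          congr 1; ring
      _ ≤ ∫⁻ y in Ico p q, absKernel x y * ‖g x‖ₑ ∂σ := by
          refine setLIntegral_mono' measurableSet_Ico fun y hy => ?_
          gcongr
          unfold absKernel
          calc ENNReal.ofReal (2⁻¹ * g x) ≤ ENNReal.ofReal (d x)⁻¹ :=
                ENNReal.ofReal_le_ofReal (by linarith [(hgd x hxS).2])
            _ = (ENNReal.ofReal (d x))⁻¹ := ENNReal.ofReal_inv_of_pos hd0
            _ ≤ _ := by
                gcongr
                exact hdy y hy
      _ = ∫⁻ y, ‖(Ico p q).indicator (1 : ℝ → ℝ) y‖ₑ * absKernel x y * ‖g x‖ₑ ∂σ := by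
          rw [← lintegral_indicator measurableSet_Ico]
          refine lintegral_congr fun y => ?_
          by_cases hy : y ∈ Ico p q <;> simp [hy]
  have hreal : a * 2⁻¹ * n ^ 2 ≤ H * √a * n :=
    (ENNReal.ofReal_le_ofReal_iff (by positivity)).1 (lower.trans h0)
  have hsa : √a * √a = a := Real.mul_self_sqrt ha0
  have hfin : a * n ^ 2 ≤ 4 * H ^ 2 := by
    set z := √a * n with hz
    have hz0 : 0 ≤ z := by positivity
    have e1 : a * n ^ 2 = z ^ 2 := by rw [hz, mul_pow, sq (√a), hsa]
    have e2 : z ^ 2 ≤ 2 * H * z := by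
      rw [← e1, hz]; nlinarith
    have : z ≤ 2 * H := by
      by_contra hc
      push Not at hc
      nlinarith
    rw [e1]
    nlinarith
  calc σ (Ico p q) * ∫⁻ x in S, ENNReal.ofReal (((d x) ^ 2)⁻¹) ∂w
      ≤ ENNReal.ofReal a * ∫⁻ x, ‖g x‖ₑ ^ 2 ∂w := by
        rw [haσ]
        refine mul_le_mul' le_rfl ?_
        refine le_trans (setLIntegral_mono' (g := fun x => ‖g x‖ₑ ^ 2) hS fun x hx => ?_)
          (setLIntegral_le_lintegral S _)
        obtain ⟨hd0, -⟩ := hd x hx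
        rw [Real.enorm_of_nonneg (hg0 x), ← ENNReal.ofReal_pow (hg0 x), ← inv_pow]
        have := (hgd x hx).1
        gcongr
    _ = ENNReal.ofReal (a * n ^ 2) := by rw [← hn2, ENNReal.ofReal_mul ha0]
    _ ≤ _ := ENNReal.ofReal_le_ofReal hfin

/-- A dyadic step function comparable to `1 / (x - p)` to the right of `p`. -/
lemma exists_step_right (p : ℝ) {δ : ℝ} (hδ : 0 < δ) (N : ℕ) :
    ∃ g : ℝ → ℝ, InF g ∧ (∀ x, 0 ≤ g x) ∧ (∀ x, g x ≠ 0 → x ∈ Ico (p + δ) (p + 2 ^ N * δ)) ∧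
      ∀ x ∈ Ico (p + δ) (p + 2 ^ N * δ), (x - p)⁻¹ ≤ g x ∧ g x ≤ 2 * (x - p)⁻¹ := by
  induction N with
  | zero => exact ⟨0, Submodule.zero_mem _, fun _ => le_rfl, by simp, by simp⟩
  | succ N ih =>
    obtain ⟨g, hg, hg0, hgs, hgb⟩ := ih
    have h2 : (1 : ℝ) ≤ 2 ^ N := one_le_pow₀ (by norm_num)
    have hpos : 0 < 2 ^ N * δ := by positivity
    have hle : δ ≤ 2 ^ N * δ := by nlinarith
    have hs : (2 : ℝ) ^ (N + 1) * δ = 2 * (2 ^ N * δ) := by ring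
    set t := 2 ^ N * δ with ht
    rw [hs]
    refine ⟨g + t⁻¹ • (Ico (p + t) (p + 2 * t)).indicator 1, hg.add ((InF.ico _ _).smul _),
      fun x => ?_, fun x hx => ?_, fun x hx => ?_⟩
    · have := indicator_one_nonneg (Ico (p + t) (p + 2 * t)) x
      have := hg0 x
      simp only [Pi.add_apply, Pi.smul_apply, smul_eq_mul]
      positivity
    · by_cases h1 : g x = 0
      · by_cases h3 : x ∈ Ico (p + t) (p + 2 * t)
        · exact ⟨by linarith [h3.1], h3.2⟩
        · simp [h1, h3] at hx
      · have := hgs x h1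
        exact ⟨this.1, by linarith [this.2]⟩
    · rcases lt_or_ge x (p + t) with h3 | h3
      · have : x ∉ Ico (p + t) (p + 2 * t) := fun h => by linarith [h.1]
        simpa [this] using hgb x ⟨hx.1, h3⟩
      · have h4 : x ∈ Ico (p + t) (p + 2 * t) := ⟨h3, hx.2⟩
        have h5 : g x = 0 := by
          by_contra h
          linarith [(hgs x h).2]
        simp only [Pi.add_apply, Pi.smul_apply, h5, h4, indicator_of_mem, Pi.one_apply, smul_eq_mul,
          mul_one, zero_add]
        have h6 : 0 < x - p := by linarith
        constructor
        · gcongr; linarith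
        · rw [← div_eq_mul_inv, inv_eq_one_div, div_le_div_iff₀ hpos h6]
          linarith [hx.2]

/-- A dyadic step function comparable to `1 / (q - x)` to the left of `q`. -/
lemma exists_step_left (q : ℝ) {δ : ℝ} (hδ : 0 < δ) (N : ℕ) :
    ∃ g : ℝ → ℝ, InF g ∧ (∀ x, 0 ≤ g x) ∧ (∀ x, g x ≠ 0 → x ∈ Ico (q - 2 ^ N * δ) (q - δ)) ∧
      ∀ x ∈ Ico (q - 2 ^ N * δ) (q - δ), (q - x)⁻¹ ≤ g x ∧ g x ≤ 2 * (q - x)⁻¹ := by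
  induction N with
  | zero => exact ⟨0, Submodule.zero_mem _, fun _ => le_rfl, by simp, by simp⟩
  | succ N ih =>
    obtain ⟨g, hg, hg0, hgs, hgb⟩ := ih
    have h2 : (1 : ℝ) ≤ 2 ^ N := one_le_pow₀ (by norm_num)
    have hpos : 0 < 2 ^ N * δ := by positivity
    have hle : δ ≤ 2 ^ N * δ := by nlinarith
    have hs : (2 : ℝ) ^ (N + 1) * δ = 2 * (2 ^ N * δ) := by ring
    set t := 2 ^ N * δ with ht
    rw [hs]
    refine ⟨g + t⁻¹ • (Ico (q - 2 * t) (q - t)).indicator 1, hg.add ((InF.ico _ _).smul _),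
      fun x => ?_, fun x hx => ?_, fun x hx => ?_⟩
    · have := indicator_one_nonneg (Ico (q - 2 * t) (q - t)) x
      have := hg0 x
      simp only [Pi.add_apply, Pi.smul_apply, smul_eq_mul]
      positivity
    · by_cases h1 : g x = 0
      · by_cases h3 : x ∈ Ico (q - 2 * t) (q - t)
        · exact ⟨h3.1, by linarith [h3.2]⟩
        · simp [h1, h3] at hx
      · have := hgs x h1
        exact ⟨by linarith [this.1], this.2⟩
    · rcases lt_or_ge x (q - t) with h3 | h3
      · have h4 : x ∈ Ico (q - 2 * t) (q - t) := ⟨hx.1, h3⟩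
        have h5 : g x = 0 := by
          by_contra h
          linarith [(hgs x h).1]
        simp only [Pi.add_apply, Pi.smul_apply, h5, h4, indicator_of_mem, Pi.one_apply, smul_eq_mul,
          mul_one, zero_add]
        have h6 : 0 < q - x := by linarith
        constructor
        · gcongr; linarith
        · rw [← div_eq_mul_inv, inv_eq_one_div, div_le_div_iff₀ hpos h6]
          linarith [hx.1]
      · have : x ∉ Ico (q - 2 * t) (q - t) := fun h => by linarith [h.2]
        simpa [this] using hgb x ⟨h3, hx.2⟩

lemma exists_le_two_pow_mul (s : ℝ) {δ : ℝ} (hδ : 0 < δ) : ∃ N : ℕ, s ≤ 2 ^ N * δ := by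
  obtain ⟨N, hN⟩ := pow_unbounded_of_one_lt (s / δ) (one_lt_two : (1 : ℝ) < 2)
  exact ⟨N, ((div_lt_iff₀ hδ).1 hN).le⟩

/-- One-sided Poisson bound over `[r, s)` strictly to the right of `[p, q]`; distances are measured
from the far endpoint `p`. -/
lemma SeparatedTesting.right (h : SeparatedTesting σ w H) (hH : 0 ≤ H) {p q r s : ℝ} (hpq : p ≤ q)
    (hqr : q < r) :
    σ (Icc p q) * ∫⁻ x in Ico r s, ENNReal.ofReal (((x - p) ^ 2)⁻¹) ∂w ≤
      ENNReal.ofReal (4 * H ^ 2) := by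
  have hδ : 0 < r - p := by linarith
  obtain ⟨N, hN⟩ := exists_le_two_pow_mul (s - p) hδ
  obtain ⟨g, hg, hg0, hgs, hgb⟩ := exists_step_right p hδ N
  have e : p + (r - p) = r := by ring
  rw [e] at hgs hgb
  have key := h.mul_lintegral_le hH (p := p) (q := (q + r) / 2) (δ := (r - q) / 2) (by linarith) hg
    hg0 (by linarith) (Or.inl fun x hx => by linarith [(hgs x hx).1]) measurableSet_Ico
    (d := fun x => x - p) hgs
    (fun x hx => ⟨by linarith [hx.1], fun y hy => by
      rw [abs_of_nonneg (by linarith [hx.1, hy.2])]; linarith [hy.1]⟩) hgb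
  refine le_trans ?_ key
  gcongr
  · linarith
  · linarith

/-- One-sided Poisson bound on the left. The test interval has to contain `q`, so it is `[p, q')` with
`q' = q + (p - s)`, and distances are measured from `q'`. -/
lemma SeparatedTesting.left (h : SeparatedTesting σ w H) (hH : 0 ≤ H) {p q r s : ℝ} (hpq : p ≤ q)
    (hsp : s < p) :
    σ (Icc p q) * ∫⁻ x in Ico r s, ENNReal.ofReal (((q + (p - s) - x) ^ 2)⁻¹) ∂w ≤
      ENNReal.ofReal (4 * H ^ 2) := by
  set q' := q + (p - s) with hq'
  have hδ : 0 < q' - s := by linarith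
  obtain ⟨N, hN⟩ := exists_le_two_pow_mul (q' - r) hδ
  obtain ⟨g, hg, hg0, hgs, hgb⟩ := exists_step_left q' hδ N
  have e : q' - (q' - s) = s := by ring
  rw [e] at hgs hgb
  have key := h.mul_lintegral_le hH (p := p) (q := q') (δ := p - s) (by linarith) hg
    hg0 (by linarith) (Or.inr fun x hx => by linarith [(hgs x hx).2]) measurableSet_Ico
    (d := fun x => q' - x) hgs
    (fun x hx => ⟨by linarith [hx.2], fun y hy => by
      rw [abs_of_nonpos (by linarith [hx.2, hy.1])]; linarith [hy.2]⟩) hgb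
  refine le_trans ?_ key
  gcongr
  · linarith
  · linarith

lemma innerRegular_of_sFinite (μ : Measure ℝ) [SFinite μ] : μ.InnerRegular := by
  rw [← sum_sfiniteSeq μ]
  infer_instance

/-- A product bound over all compact subsets passes to the sets themselves. -/
lemma mul_le_of_forall_compact {μ ν : Measure ℝ} [SFinite μ] [SFinite ν] {I R : Set ℝ}
    (hI : MeasurableSet I) (hR : MeasurableSet R) {M : ℝ≥0∞}
    (h : ∀ K₁ K₂, K₁ ⊆ I → K₂ ⊆ R → IsCompact K₁ → IsCompact K₂ → K₁.Nonempty → K₂.Nonempty →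
      μ K₁ * ν K₂ ≤ M) : μ I * ν R ≤ M := by
  have := innerRegular_of_sFinite μ
  have := innerRegular_of_sFinite ν
  rw [hI.measure_eq_iSup_isCompact μ, hR.measure_eq_iSup_isCompact ν]
  simp only [ENNReal.iSup_mul, ENNReal.mul_iSup, iSup_le_iff]
  intro K₂ h2 c2 K₁ h1 c1
  rcases K₁.eq_empty_or_nonempty with rfl | n1
  · simp
  rcases K₂.eq_empty_or_nonempty with rfl | n2
  · simp
  exact h K₁ K₂ h1 h2 c1 c2 n1 n2

/-- The two sides of the complement are treated separately. For compact `K₁ ⊆ I` and `K₂ ⊆ Iᶜ` on one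
side of `I`, the convex hulls are at positive distance, and the distance to the far end of `K₁` is at
most `2 |x - c|` on the right and `4 |x - c|` on the left (where half the gap is added), with `c` the
center of `I`; this gives `16 H² + 64 H² ≤ (9 H)²`. -/
lemma SeparatedTesting.a2star (h : SeparatedTesting σ w H) (hH : 0 ≤ H) : A2star σ w (9 * H) := by
  intro I hI hb
  rcases I.eq_empty_or_nonempty with rfl | hne
  · simp
  set a := sInf I with ha
  set b := sSup I with hb'
  set c := (a + b) / 2 with hc
  have hIm : MeasurableSet I := hI.measurableSet
  have hla : ∀ y ∈ I, a ≤ y := fun y hy => csInf_le hb.bddBelow hy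
  have hub : ∀ y ∈ I, y ≤ b := fun y hy => le_csSup hb.bddAbove hy
  have hFm : Measurable fun x : ℝ => ENNReal.ofReal (((x - c) ^ 2)⁻¹) := by fun_prop
  have hR : MeasurableSet (Iᶜ ∩ Ici b) := hIm.compl.inter measurableSet_Ici
  have hLm : MeasurableSet (Iᶜ ∩ Iic a) := hIm.compl.inter measurableSet_Iic
  have hcover : Iᶜ ⊆ (Iᶜ ∩ Ici b) ∪ (Iᶜ ∩ Iic a) := by
    intro x hx
    by_cases h1 : b ≤ x
    · exact Or.inl ⟨hx, h1⟩
    by_cases h2 : x ≤ a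
    · exact Or.inr ⟨hx, h2⟩
    push Not at h1 h2
    obtain ⟨y, hy, hy'⟩ := exists_lt_of_csInf_lt hne h2
    obtain ⟨z, hz, hz'⟩ := exists_lt_of_lt_csSup hne h1
    exact absurd (hI.out hy hz ⟨hy'.le, hz'.le⟩) hx
  have right : σ I * ∫⁻ x in Iᶜ ∩ Ici b, ENNReal.ofReal (((x - c) ^ 2)⁻¹) ∂w ≤
      ENNReal.ofReal (16 * H ^ 2) := by
    rw [← withDensity_apply _ hR]
    refine mul_le_of_forall_compact hIm hR fun K₁ K₂ s1 s2 c1 c2 n1 n2 => ?_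
    rw [withDensity_apply _ c2.measurableSet]
    have p1 := s1 (c1.sInf_mem n1)
    have q1 := s1 (c1.sSup_mem n1)
    have r1 := s2 (c2.sInf_mem n2)
    have hsub1 : K₁ ⊆ Icc (sInf K₁) (sSup K₁) := subset_Icc_csInf_csSup c1.bddBelow c1.bddAbove
    have hsub2 : K₂ ⊆ Icc (sInf K₂) (sSup K₂) := subset_Icc_csInf_csSup c2.bddBelow c2.bddAbove
    have hpq : sInf K₁ ≤ sSup K₁ := Real.sInf_le_sSup _ c1.bddBelow c1.bddAbove
    set p := sInf K₁
    set q := sSup K₁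
    set r := sInf K₂
    set s := sSup K₂
    have hqr : q < r := by
      refine lt_of_le_of_ne ((hub q q1).trans r1.2) fun heq => r1.1 (heq ▸ q1)
    have key := h.right hH (s := s + 1) hpq hqr
    calc _ ≤ σ (Icc p q) * (ENNReal.ofReal (2 ^ 2) *
          ∫⁻ x in Ico r (s + 1), ENNReal.ofReal (((x - p) ^ 2)⁻¹) ∂w) := by
          gcongr
          refine lintegral_ofReal_inv_sq_le c2.measurableSet (fun x hx => ?_) (by norm_num)
            (by fun_prop) fun x hx => ?_
          · exact ⟨(hsub2 hx).1, by linarith [(hsub2 hx).2]⟩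
          · have hx1 : b ≤ x := (s2 hx).2
            have hx2 := (hsub2 hx).1
            have hp := hla p p1
            refine ⟨by linarith, ?_⟩
            have := le_abs_self (x - c)
            rw [hc] at this ⊢
            linarith
      _ ≤ ENNReal.ofReal (2 ^ 2) * ENNReal.ofReal (4 * H ^ 2) := by
          rw [mul_left_comm]; gcongr
      _ = _ := by
          rw [← ENNReal.ofReal_mul (by positivity)]; congr 1; ring
  have left : σ I * ∫⁻ x in Iᶜ ∩ Iic a, ENNReal.ofReal (((x - c) ^ 2)⁻¹) ∂w ≤
      ENNReal.ofReal (64 * H ^ 2) := by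
    rw [← withDensity_apply _ hLm]
    refine mul_le_of_forall_compact hIm hLm fun K₁ K₂ s1 s2 c1 c2 n1 n2 => ?_
    rw [withDensity_apply _ c2.measurableSet]
    have p1 := s1 (c1.sInf_mem n1)
    have q1 := s1 (c1.sSup_mem n1)
    have r1 := s2 (c2.sSup_mem n2)
    have hsub1 : K₁ ⊆ Icc (sInf K₁) (sSup K₁) := subset_Icc_csInf_csSup c1.bddBelow c1.bddAbove
    have hsub2 : K₂ ⊆ Icc (sInf K₂) (sSup K₂) := subset_Icc_csInf_csSup c2.bddBelow c2.bddAbove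
    have hpq : sInf K₁ ≤ sSup K₁ := Real.sInf_le_sSup _ c1.bddBelow c1.bddAbove
    set p := sInf K₁
    set q := sSup K₁
    set r := sInf K₂
    set s := sSup K₂
    have hsp : s < p := by
      refine lt_of_le_of_ne (le_trans r1.2 (hla p p1)) fun heq => r1.1 (heq ▸ p1)
    have key := h.left hH (r := r) (s := (s + p) / 2) hpq (by linarith)
    calc _ ≤ σ (Icc p q) * (ENNReal.ofReal (4 ^ 2) *
          ∫⁻ x in Ico r ((s + p) / 2),
            ENNReal.ofReal (((q + (p - (s + p) / 2) - x) ^ 2)⁻¹) ∂w) := by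
          gcongr
          refine lintegral_ofReal_inv_sq_le c2.measurableSet (fun x hx => ?_) (by norm_num)
            (by fun_prop) fun x hx => ?_
          · exact ⟨(hsub2 hx).1, by linarith [(hsub2 hx).2]⟩
          · have hx1 : x ≤ a := (s2 hx).2
            have hx2 := (hsub2 hx).2
            have hq := hub q q1
            refine ⟨by linarith, ?_⟩
            have := neg_le_abs (x - c)
            rw [hc] at this ⊢
            linarith
      _ ≤ ENNReal.ofReal (4 ^ 2) * ENNReal.ofReal (4 * H ^ 2) := by
          rw [mul_left_comm]; gcongr
      _ = _ := by
          rw [← ENNReal.ofReal_mul (by positivity)]; congr 1; ring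
  calc σ I * ∫⁻ x in Iᶜ, ENNReal.ofReal (((x - c) ^ 2)⁻¹) ∂w
      ≤ σ I * (∫⁻ x in Iᶜ ∩ Ici b, ENNReal.ofReal (((x - c) ^ 2)⁻¹) ∂w +
          ∫⁻ x in Iᶜ ∩ Iic a, ENNReal.ofReal (((x - c) ^ 2)⁻¹) ∂w) := by
        gcongr
        exact (lintegral_mono_set hcover).trans (lintegral_union_le _ _ _)
    _ ≤ ENNReal.ofReal (16 * H ^ 2) + ENNReal.ofReal (64 * H ^ 2) := by
        rw [mul_add]; gcongr
    _ ≤ ENNReal.ofReal ((9 * H) ^ 2) := by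
        rw [← ENNReal.ofReal_add (by positivity) (by positivity)]
        refine ENNReal.ofReal_le_ofReal ?_
        nlinarith [sq_nonneg H]

end Separated

theorem statement1 :
    ∃ C : ℝ, 0 < C ∧
      ∀ (σ w : Measure ℝ) [IsLocallyFiniteMeasure σ] [IsLocallyFiniteMeasure w]
        (B : (ℝ → ℝ) → (ℝ → ℝ) → ℝ),
        BilinearOnF B →
        HilbertKernelProp σ w B →
        -- the global testing conditions hold iff the local testing conditions and the
        -- Muckenhoupt–Poisson `A₂` conditions hold:
        ((∃ Hg Hg' : ℝ, 0 ≤ Hg ∧ 0 ≤ Hg' ∧ GlobalTesting σ w B Hg Hg') ↔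
          (∃ H H' A A' : ℝ, 0 ≤ H ∧ 0 ≤ H' ∧ 0 ≤ A ∧ 0 ≤ A' ∧
            LocalTesting σ w B H H' ∧ A2star σ w A ∧ A2star w σ A')) ∧
        -- moreover, `𝓗_glob + 𝓗*_glob ≂ 𝓗 + 𝓗* + [σ,w]_{A₂}* + [w,σ]_{A₂}*`
        -- up to the absolute constant `C`:
        (∀ Hg Hg' : ℝ, 0 ≤ Hg → 0 ≤ Hg' → GlobalTesting σ w B Hg Hg' →
          ∃ H H' A A' : ℝ, 0 ≤ H ∧ 0 ≤ H' ∧ 0 ≤ A ∧ 0 ≤ A' ∧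
            LocalTesting σ w B H H' ∧ A2star σ w A ∧ A2star w σ A' ∧
            H + H' + A + A' ≤ C * (Hg + Hg')) ∧
        (∀ H H' A A' : ℝ, 0 ≤ H → 0 ≤ H' → 0 ≤ A → 0 ≤ A' →
          LocalTesting σ w B H H' → A2star σ w A → A2star w σ A' →
          ∃ Hg Hg' : ℝ, 0 ≤ Hg ∧ 0 ≤ Hg' ∧ GlobalTesting σ w B Hg Hg' ∧
            Hg + Hg' ≤ C * (H + H' + A + A')) := by
  have nec : ∀ (σ w : Measure ℝ) [IsLocallyFiniteMeasure σ] [IsLocallyFiniteMeasure w]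
      (B : (ℝ → ℝ) → (ℝ → ℝ) → ℝ), HilbertKernelProp σ w B → ∀ Hg Hg' : ℝ, 0 ≤ Hg → 0 ≤ Hg' →
      GlobalTesting σ w B Hg Hg' →
      LocalTesting σ w B Hg Hg' ∧ A2star σ w (9 * Hg) ∧ A2star w σ (9 * Hg') :=
    fun σ w _ _ B hH Hg Hg' h0 h0' h => ⟨localTesting_of_global h0 h0' h,
      (separatedTesting hH h).a2star h0, (separatedTesting_dual hH h).a2star h0'⟩
  refine ⟨28, by norm_num, fun σ w _ _ B hB hH => ⟨⟨?_, ?_⟩, ?_, ?_⟩⟩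
  · rintro ⟨Hg, Hg', h0, h0', h⟩
    obtain ⟨h1, h2, h3⟩ := nec σ w B hH Hg Hg' h0 h0' h
    exact ⟨Hg, Hg', 9 * Hg, 9 * Hg', h0, h0', by positivity, by positivity, h1, h2, h3⟩
  · rintro ⟨H, H', A, A', h0, h0', hA0, hA0', hL, hA, hA'⟩
    exact ⟨_, _, by positivity, by positivity, globalTesting_of_local hB hH hA0 hA0' hL hA hA'⟩
  · intro Hg Hg' h0 h0' h
    obtain ⟨h1, h2, h3⟩ := nec σ w B hH Hg Hg' h0 h0' h
    exact ⟨Hg, Hg', 9 * Hg, 9 * Hg', h0, h0', by positivity, by positivity, h1, h2, h3,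
      by linarith⟩
  · intro H H' A A' h0 h0' hA0 hA0' hL hA hA'
    exact ⟨_, _, by positivity, by positivity, globalTesting_of_local hB hH hA0 hA0' hL hA hA',
      by linarith⟩
end
end

section
/- Let σ and w be Radon measures on ℝ. For each finite interval I, let b_I be the unique point (if it exists) such that P(1_{{b_I}} dσ, I) > ½ P(dσ, I) and P(1_{{b_I}} dw, I) > ½ P(dw, I); set σ̃_I := σ − σ{b_I} δ_{b_I} if b_I exists and σ̃_I := σ otherwise, and define w̃_I similarly. If there is a constant A such that P(dσ̃_I, I) P(dw, I) + P(dw̃_I, I) P(dσ, I) ≤ A² for all finite intervals I, then [σ,w]_{A₂}* + [w,σ]_{A₂}* ≤ C·A for an absolute constant C. -/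
/-!
For an interval `I` of positive length, `(x - c_I)⁻²` on `Iᶜ` and the constant `1` on `I` are
dominated by multiples of the Poisson kernel, so
`σ(I) ∫_{Iᶜ} (x - c_I)⁻² dw ≤ (25/4) P(1_I dσ, I) P(1_{Iᶜ} dw, I)`.
The right-hand product is at most `(25/4) A²`: if there is no heavy point this is immediate, and a
heavy point misses either `I` or `Iᶜ`, so the corresponding factor is unaffected by its removal
(`pois_mul_pois_compl_le`). One-point intervals, which are also admitted in `A2star`, follow by
shrinking intervals around the point (`singleton_bound`). Since the product bound holds for every
set in place of `I`, it is symmetric in `σ` and `w`; hence `C = 5` works.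
-/

open MeasureTheory Set
open scoped ENNReal

noncomputable section

/-- The Poisson integral `P(dμ, I) = ∫ |I| (|I|² + (x - c_I)²)⁻¹ dμ(x)` of a measure `μ`
for the interval with center `c` and length `ℓ`. -/
def Pois (μ : Measure ℝ) (c ℓ : ℝ) : ℝ≥0∞ :=
  ∫⁻ x, ENNReal.ofReal (ℓ / (ℓ ^ 2 + (x - c) ^ 2)) ∂μ

/-- `p` is the (automatically unique) point carrying more than half of the Poisson integrals
of both `σ` and `w` for the interval with center `c` and length `ℓ`. -/
def IsHeavyPoint (σ w : Measure ℝ) (c ℓ : ℝ) (p : ℝ) : Prop :=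
  (1 / 2 : ℝ≥0∞) * Pois σ c ℓ < Pois (σ.restrict {p}) c ℓ ∧
  (1 / 2 : ℝ≥0∞) * Pois w c ℓ < Pois (w.restrict {p}) c ℓ

/-- The constraint on `σ` and `w` at the interval with center `c` and length `ℓ` controls the
product of the Poisson integrals over any set and its complement: a heavy point `p` lies outside
one of the two sets, and the integral over that set survives the removal of `p`. -/
lemma pois_mul_pois_compl_le {σ w : Measure ℝ} {c ℓ : ℝ} {B : ℝ≥0∞}
    (h1 : ∀ p : ℝ, IsHeavyPoint σ w c ℓ p →
      Pois (σ.restrict {p}ᶜ) c ℓ * Pois w c ℓ + Pois (w.restrict {p}ᶜ) c ℓ * Pois σ c ℓ ≤ B)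
    (h2 : (¬ ∃ p : ℝ, IsHeavyPoint σ w c ℓ p) →
      Pois σ c ℓ * Pois w c ℓ + Pois w c ℓ * Pois σ c ℓ ≤ B)
    (S : Set ℝ) :
    Pois (σ.restrict S) c ℓ * Pois (w.restrict Sᶜ) c ℓ ≤ B := by
  have mono : ∀ {μ ν : Measure ℝ}, μ ≤ ν → Pois μ c ℓ ≤ Pois ν c ℓ :=
    fun h => lintegral_mono' h le_rfl
  by_cases hp : ∃ p : ℝ, IsHeavyPoint σ w c ℓ p
  · obtain ⟨p, hp⟩ := hp
    by_cases hpS : p ∈ S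
    · refine le_trans ?_ (le_trans le_add_self (h1 p hp))
      rw [mul_comm]
      refine mul_le_mul' (mono (Measure.restrict_mono ?_ le_rfl)) (mono Measure.restrict_le_self)
      intro x hx hxp
      exact hx ((mem_singleton_iff.1 hxp) ▸ hpS)
    · refine le_trans ?_ (le_trans le_self_add (h1 p hp))
      refine mul_le_mul' (mono (Measure.restrict_mono ?_ le_rfl)) (mono Measure.restrict_le_self)
      intro x hx hxp
      exact hpS ((mem_singleton_iff.1 hxp) ▸ hx)
  · exact le_trans (mul_le_mul' (mono Measure.restrict_le_self) (mono Measure.restrict_le_self))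
      (le_trans le_self_add (h2 hp))

/-- On a set within distance `ℓ / 2` of `c` the Poisson kernel is at least `4 / (5 ℓ)`. -/
lemma measure_le_pois (μ : Measure ℝ) {I : Set ℝ} (hI : MeasurableSet I) {c ℓ : ℝ} (hℓ : 0 < ℓ)
    (h : ∀ x ∈ I, |x - c| ≤ ℓ / 2) :
    μ I ≤ ENNReal.ofReal (5 / 4 * ℓ) * Pois (μ.restrict I) c ℓ := by
  unfold Pois
  rw [← lintegral_const_mul' _ _ ENNReal.ofReal_ne_top, ← setLIntegral_one]
  refine setLIntegral_mono' hI fun x hx => ?_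
  rw [← ENNReal.ofReal_mul (by positivity), ← ENNReal.ofReal_one]
  apply ENNReal.ofReal_le_ofReal
  have h3 : (x - c) ^ 2 ≤ (ℓ / 2) ^ 2 := sq_le_sq.2 (by rw [abs_of_pos (half_pos hℓ)]; exact h x hx)
  rw [mul_div_assoc', le_div_iff₀ (by positivity)]
  nlinarith

/-- On a set at distance at least `ℓ / 2` from `c` the kernel `(x - c)⁻²` is at most `5 / ℓ`
times the Poisson kernel. -/
lemma lintegral_inv_sq_le_pois (μ : Measure ℝ) {E : Set ℝ} (hE : MeasurableSet E) {c ℓ : ℝ}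
    (hℓ : 0 < ℓ) (h : ∀ x ∈ E, ℓ / 2 ≤ |x - c|) :
    ∫⁻ x in E, ENNReal.ofReal (((x - c) ^ 2)⁻¹) ∂μ ≤
      ENNReal.ofReal (5 / ℓ) * Pois (μ.restrict E) c ℓ := by
  unfold Pois
  rw [← lintegral_const_mul' _ _ ENNReal.ofReal_ne_top]
  refine setLIntegral_mono' hE fun x hx => ?_
  rw [← ENNReal.ofReal_mul (by positivity)]
  apply ENNReal.ofReal_le_ofReal
  have h3 : (ℓ / 2) ^ 2 ≤ (x - c) ^ 2 := sq_le_sq.2 (by rw [abs_of_pos (half_pos hℓ)]; exact h x hx)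
  have h4 : 0 < (x - c) ^ 2 := lt_of_lt_of_le (by positivity) h3
  have h5 : 5 / ℓ * (ℓ / (ℓ ^ 2 + (x - c) ^ 2)) = 5 / (ℓ ^ 2 + (x - c) ^ 2) := by
    field_simp
  rw [h5, inv_eq_one_div, div_le_div_iff₀ h4 (by positivity)]
  nlinarith

/-- The case of a one-point interval, obtained from the intervals of length `ℓ → 0` centered at
that point by monotone convergence. -/
lemma singleton_bound {σ w : Measure ℝ} {B : ℝ≥0∞} (p : ℝ)
    (h : ∀ ℓ : ℝ, 0 < ℓ → Pois (σ.restrict {p}) p ℓ * Pois (w.restrict {p}ᶜ) p ℓ ≤ B) :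
    σ {p} * ∫⁻ x in {p}ᶜ, ENNReal.ofReal (((x - p) ^ 2)⁻¹) ∂w ≤ B := by
  set u : ℕ → ℝ := fun n => 1 / ((n : ℝ) + 1) with hu
  have hupos : ∀ n, 0 < u n := fun n => by positivity
  have hanti : Antitone u := fun m n hmn => one_div_le_one_div_of_le (by positivity) (by gcongr)
  have hlim : Filter.Tendsto u Filter.atTop (nhds 0) := tendsto_one_div_add_atTop_nhds_zero_nat
  have hstep : ∀ n, σ {p} * ∫⁻ x in {p}ᶜ, ENNReal.ofReal ((u n ^ 2 + (x - p) ^ 2)⁻¹) ∂w ≤ B := by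
    intro n
    refine le_trans (le_of_eq ?_) (h (u n) (hupos n))
    have h0 := hupos n
    have e1 : Pois (σ.restrict {p}) p (u n) = ENNReal.ofReal (u n)⁻¹ * σ {p} := by
      have e : u n / (u n ^ 2 + (p - p) ^ 2) = (u n)⁻¹ := by
        rw [sub_self]
        field_simp
        ring
      simp only [Pois, lintegral_singleton, e]
    have e2 : Pois (w.restrict {p}ᶜ) p (u n) =
        ENNReal.ofReal (u n) *
          ∫⁻ x in {p}ᶜ, ENNReal.ofReal ((u n ^ 2 + (x - p) ^ 2)⁻¹) ∂w := by
      rw [← lintegral_const_mul' _ _ ENNReal.ofReal_ne_top, Pois]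
      refine lintegral_congr fun x => ?_
      rw [← ENNReal.ofReal_mul h0.le, div_eq_mul_inv]
    rw [e1, e2, mul_mul_mul_comm, ← ENNReal.ofReal_mul (inv_nonneg.2 h0.le),
      inv_mul_cancel₀ h0.ne', ENNReal.ofReal_one, one_mul]
  have hT : Filter.Tendsto
      (fun n => ∫⁻ x in {p}ᶜ, ENNReal.ofReal ((u n ^ 2 + (x - p) ^ 2)⁻¹) ∂w) Filter.atTop
      (nhds (∫⁻ x in {p}ᶜ, ENNReal.ofReal (((x - p) ^ 2)⁻¹) ∂w)) := by
    refine lintegral_tendsto_of_tendsto_of_monotone (fun n => ?_) ?_ ?_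
    · fun_prop
    · refine Filter.Eventually.of_forall fun x m n hmn => ?_
      have h0 := hupos n
      have h1 := hanti hmn
      apply ENNReal.ofReal_le_ofReal
      gcongr
    · filter_upwards [ae_restrict_mem (measurableSet_singleton p).compl] with x hx
      have hx' : (x - p) ^ 2 ≠ 0 := pow_ne_zero 2 (sub_ne_zero.2 hx)
      refine (ENNReal.continuous_ofReal.tendsto _).comp (Filter.Tendsto.inv₀ ?_ hx')
      simpa using (hlim.pow 2).add_const ((x - p) ^ 2)
  by_cases h0 : ∫⁻ x in {p}ᶜ, ENNReal.ofReal (((x - p) ^ 2)⁻¹) ∂w = 0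
  · simp [h0]
  · exact le_of_tendsto' (ENNReal.Tendsto.const_mul hT (Or.inl h0)) hstep

lemma a2star_of_pois_bound {σ w : Measure ℝ} {A : ℝ}
    (h : ∀ c ℓ : ℝ, 0 < ℓ → ∀ S : Set ℝ,
      Pois (σ.restrict S) c ℓ * Pois (w.restrict Sᶜ) c ℓ ≤ ENNReal.ofReal (A ^ 2)) :
    A2star σ w (5 / 2 * A) := by
  intro I hI hb
  rcases I.eq_empty_or_nonempty with rfl | hne
  · simp
  have hsub : ∀ x ∈ I, sInf I ≤ x ∧ x ≤ sSup I := fun x hx =>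
    ⟨csInf_le hb.bddBelow hx, le_csSup hb.bddAbove hx⟩
  obtain ⟨y, hy⟩ := hne
  rcases ((hsub y hy).1.trans (hsub y hy).2).eq_or_lt with heq | hlt
  · have hIy : I = {y} := by
      ext x
      constructor
      · intro hx
        have := hsub x hx
        have := hsub y hy
        exact mem_singleton_iff.2 (by linarith)
      · rintro rfl
        exact hy
    subst hIy
    simp only [csInf_singleton, csSup_singleton, add_self_div_two]
    refine (singleton_bound y fun ℓ hℓ => h y ℓ hℓ {y}).trans (ENNReal.ofReal_le_ofReal ?_)
    nlinarith [sq_nonneg A]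
  · have hmeas : MeasurableSet I := hI.measurableSet
    have hℓ : 0 < sSup I - sInf I := sub_pos.2 hlt
    have hin : ∀ x ∈ I, |x - (sInf I + sSup I) / 2| ≤ (sSup I - sInf I) / 2 := fun x hx => by
      have := hsub x hx
      exact abs_le.2 ⟨by linarith, by linarith⟩
    have hout : ∀ x ∈ Iᶜ, (sSup I - sInf I) / 2 ≤ |x - (sInf I + sSup I) / 2| := by
      intro x hx
      by_contra hcon
      rw [not_le, abs_lt] at hcon
      obtain ⟨u, hu, hux⟩ := exists_lt_of_csInf_lt ⟨y, hy⟩ (show sInf I < x by linarith)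
      obtain ⟨v, hv, hxv⟩ := exists_lt_of_lt_csSup ⟨y, hy⟩ (show x < sSup I by linarith)
      exact hx (hI.out hu hv ⟨hux.le, hxv.le⟩)
    refine (mul_le_mul' (measure_le_pois σ hmeas hℓ hin)
      (lintegral_inv_sq_le_pois w hmeas.compl hℓ hout)).trans ?_
    rw [mul_mul_mul_comm, ← ENNReal.ofReal_mul (by positivity)]
    refine (mul_le_mul' le_rfl (h _ _ hℓ I)).trans ?_
    rw [← ENNReal.ofReal_mul (by positivity)]
    refine ENNReal.ofReal_le_ofReal (le_of_eq ?_)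
    field_simp
    ring

theorem statement2 :
    ∃ C : ℝ, 0 < C ∧
      ∀ (σ w : Measure ℝ) [IsLocallyFiniteMeasure σ] [IsLocallyFiniteMeasure w] (A : ℝ),
        0 ≤ A →
        -- Lacey's `A₂`-type condition: for every finite interval `I = [a,b)` (with center
        -- `c = (a+b)/2` and length `ℓ = b - a`),
        -- `P(dσ̃_I, I) P(dw, I) + P(dw̃_I, I) P(dσ, I) ≤ A²`.
        (∀ a b : ℝ, a < b →
          ((∀ p : ℝ, IsHeavyPoint σ w ((a + b) / 2) (b - a) p →
              Pois (σ.restrict {p}ᶜ) ((a + b) / 2) (b - a) * Pois w ((a + b) / 2) (b - a) +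
                Pois (w.restrict {p}ᶜ) ((a + b) / 2) (b - a) * Pois σ ((a + b) / 2) (b - a) ≤
                  ENNReal.ofReal (A ^ 2)) ∧
           ((¬ ∃ p : ℝ, IsHeavyPoint σ w ((a + b) / 2) (b - a) p) →
              Pois σ ((a + b) / 2) (b - a) * Pois w ((a + b) / 2) (b - a) +
                Pois w ((a + b) / 2) (b - a) * Pois σ ((a + b) / 2) (b - a) ≤
                  ENNReal.ofReal (A ^ 2)))) →
        ∃ A1 A2 : ℝ, 0 ≤ A1 ∧ 0 ≤ A2 ∧ A2star σ w A1 ∧ A2star w σ A2 ∧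
          A1 + A2 ≤ C * A := by
  refine ⟨5, by norm_num, fun σ w _ _ A hA H => ?_⟩
  have key : ∀ c ℓ : ℝ, 0 < ℓ → ∀ S : Set ℝ,
      Pois (σ.restrict S) c ℓ * Pois (w.restrict Sᶜ) c ℓ ≤ ENNReal.ofReal (A ^ 2) := by
    intro c ℓ hℓ S
    have H' := H (c - ℓ / 2) (c + ℓ / 2) (by linarith)
    rw [show (c - ℓ / 2 + (c + ℓ / 2)) / 2 = c by ring,
      show c + ℓ / 2 - (c - ℓ / 2) = ℓ by ring] at H'
    exact pois_mul_pois_compl_le H'.1 H'.2 S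
  refine ⟨5 / 2 * A, 5 / 2 * A, by positivity, by positivity, a2star_of_pois_bound key,
    a2star_of_pois_bound fun c ℓ hℓ S => ?_, by linarith⟩
  have := key c ℓ hℓ Sᶜ
  rwa [compl_compl, mul_comm] at this
end
end

section
/- Let σ and w be Radon measures on ℝ. For any two adjacent intervals I and J of equal length |I|, one has σ(I)^{1/2} w(J)^{1/2} / |I| ≤ (3/2) min([σ,w]_{A₂}*, [w,σ]_{A₂}*); consequently [σ,w]_{A₂} ≤ (3/2) ([σ,w]_{A₂}* ∧ [w,σ]_{A₂}*). -/
/-! Let `d` be the common length of the adjacent intervals `K` and `L`. If `d = 0`, the left-hand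
side is a quotient by zero, hence `0`. If `d > 0`, every `x ∈ L` satisfies
`d / 2 ≤ |x - c_K| ≤ 3 d / 2`, so `(x - c_K)⁻² ≥ (3 d / 2)⁻²` on `L ⊆ Kᶜ`, and testing the
Muckenhoupt–Poisson condition on `K` gives `σ(K) w(L) ≤ (3 d / 2)² A²`
(`sqrt_mul_sqrt_div_le`). The bound by the other constant is the same lemma with the roles of
`(σ, K)` and `(w, L)` exchanged. -/

open MeasureTheory Set
open scoped ENNReal

noncomputable section

/-- `K` and `L` are adjacent (bounded, nonempty, disjoint, touching) intervals
of equal length. -/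
def AdjacentEq (K L : Set ℝ) : Prop :=
  K.OrdConnected ∧ L.OrdConnected ∧ K.Nonempty ∧ L.Nonempty ∧
  Bornology.IsBounded K ∧ Bornology.IsBounded L ∧ Disjoint K L ∧
  (sSup K = sInf L ∨ sSup L = sInf K) ∧
  sSup K - sInf K = sSup L - sInf L

theorem AdjacentEq.symm {K L : Set ℝ} (h : AdjacentEq K L) : AdjacentEq L K := by
  obtain ⟨a, b, c, d, e, f, g, i, j⟩ := h
  exact ⟨b, a, d, c, f, e, g.symm, i.symm, j.symm⟩

/-- One of the two bounds: test the Muckenhoupt–Poisson condition on `K` and keep only the part of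
the integral over `L`, where the kernel is at least `(3 d / 2)⁻²`. -/
theorem sqrt_mul_sqrt_div_le {σ w : Measure ℝ} {A : ℝ} (hA : 0 ≤ A) (h : A2star σ w A)
    {K L : Set ℝ} (hKL : AdjacentEq K L) :
    Real.sqrt (σ K).toReal * Real.sqrt (w L).toReal / (sSup K - sInf K) ≤ (3 / 2) * A := by
  obtain ⟨hK, hL, hKn, -, hKb, hLb, hdisj, hadj, hlen⟩ := hKL
  have hd0 : 0 ≤ sSup K - sInf K :=
    sub_nonneg.2 (Real.sInf_le_sSup K hKb.bddBelow hKb.bddAbove)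
  rcases hd0.eq_or_lt with hd | hd
  · rw [← hd, div_zero]
    positivity
  have hKbd := h K hK hKb
  set d := sSup K - sInf K with hd_def
  have hpt : ∀ x ∈ L, ((3 / 2 * d) ^ 2)⁻¹ ≤ ((x - (sInf K + sSup K) / 2) ^ 2)⁻¹ := by
    intro x hx
    have hlo := csInf_le hLb.bddBelow hx
    have hhi := le_csSup hLb.bddAbove hx
    -- The lower bound `d / 2 ≤ |x - c_K|` is needed since the inverse of `0` is `0`.
    apply inv_anti₀
    · rcases hadj with e | e
      · exact pow_pos (by linarith) 2
      · exact sq_pos_of_neg (by linarith)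
    · rcases hadj with e | e <;> apply sq_le_sq' <;> linarith
  have hint : ENNReal.ofReal ((3 / 2 * d) ^ 2)⁻¹ * w L ≤
      ∫⁻ x in Kᶜ, ENNReal.ofReal (((x - (sInf K + sSup K) / 2) ^ 2)⁻¹) ∂w :=
    calc ENNReal.ofReal ((3 / 2 * d) ^ 2)⁻¹ * w L
        = ∫⁻ _ in L, ENNReal.ofReal ((3 / 2 * d) ^ 2)⁻¹ ∂w := (setLIntegral_const _ _).symm
      _ ≤ ∫⁻ x in L, ENNReal.ofReal (((x - (sInf K + sSup K) / 2) ^ 2)⁻¹) ∂w :=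
          setLIntegral_mono' hL.measurableSet fun x hx => ENNReal.ofReal_le_ofReal (hpt x hx)
      _ ≤ _ := lintegral_mono_set hdisj.symm.subset_compl_right
  have hreal := ENNReal.toReal_mono ENNReal.ofReal_ne_top ((mul_le_mul_right hint (σ K)).trans hKbd)
  rw [ENNReal.toReal_mul, ENNReal.toReal_mul, ENNReal.toReal_ofReal (by positivity),
    ENNReal.toReal_ofReal (by positivity)] at hreal
  have hprod : (σ K).toReal * (w L).toReal ≤ (3 / 2 * A * d) ^ 2 := by
    have hmul := mul_le_mul_of_nonneg_right hreal (sq_nonneg (3 / 2 * d))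
    calc (σ K).toReal * (w L).toReal
        = (σ K).toReal * (((3 / 2 * d) ^ 2)⁻¹ * (w L).toReal) * (3 / 2 * d) ^ 2 := by
          field_simp
      _ ≤ _ := hmul
      _ = _ := by ring
  rw [div_le_iff₀ hd, ← Real.sqrt_mul ENNReal.toReal_nonneg]
  exact Real.sqrt_le_iff.2 ⟨by positivity, hprod⟩

theorem statement4 (σ w : Measure ℝ) [IsLocallyFiniteMeasure σ] [IsLocallyFiniteMeasure w]
    (A A' : ℝ) (hA : 0 ≤ A) (hA' : 0 ≤ A')
    (h1 : A2star σ w A) (h2 : A2star w σ A') :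
    ∀ K L : Set ℝ, AdjacentEq K L →
      Real.sqrt (σ K).toReal * Real.sqrt (w L).toReal / (sSup K - sInf K) ≤
        (3 / 2) * min A A' := by
  intro K L hKL
  rw [mul_min_of_nonneg _ _ (by norm_num)]
  refine le_min (sqrt_mul_sqrt_div_le hA h1 hKL) ?_
  have hswap := sqrt_mul_sqrt_div_le hA' h2 hKL.symm
  obtain ⟨-, -, -, -, -, -, -, -, hlen⟩ := hKL
  rwa [mul_comm, hlen]
end
end

section
/- Let σ and w be Radon measures on ℝ with finite Muckenhoupt–Poisson constants [σ,w]_{A₂}* and [w,σ]_{A₂}*, and let f, g ∈ 𝓕 be supported on disjoint intervals. Then the double integral ∬ (x−y)⁻¹ f(y) g(x) dσ(y) dw(x) converges absolutely, and lim_{ε→0} B_ε(f,g) = ∬ (x−y)⁻¹ f(y) g(x) dσ(y) dw(x). -/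
/-! Absolute convergence comes from a dyadic decomposition in `|x - y|`. Let `I` and `J` be
disjoint intervals carrying `f` and `g`. For `t > 0` let `Y` be the set of points of `I` within
distance `t` of `J`, and `X` the set of points of `J` within distance `t` of `I`. Both are
intervals, `Y` has diameter at most `t`, and every point of `X` lies outside `Y`, at distance at
most `2t` from the center of `Y`. Testing the `A₂` condition on `Y` therefore gives
`σ(Y) w(X) ≤ 4 A² t²` (`measure_near_mul_le`).

Since `f` and `g` have bounded support, only pairs with `|x - y| ≤ R` matter. Splitting them into
the dyadic shells `R 2⁻ⁿ⁻¹ < |x - y| ≤ R 2⁻ⁿ`, the integral of `|x - y|⁻¹` over the `n`-th shell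
is `O(2ⁿ · 4⁻ⁿ)`, which is summable (`lintegral_kernel_ne_top`). The truncations then converge by
dominated convergence, applied first to the inner and then to the outer integral. -/

open MeasureTheory Set Filter
open scoped ENNReal Topology

noncomputable section

/-- The truncated Hilbert pairing
`B_ε(f,g) = ∬_{|x-y|>ε} (x-y)⁻¹ f(y) g(x) dσ(y) dw(x)`. -/
def truncPairing (σ w : Measure ℝ) (f g : ℝ → ℝ) (ε : ℝ) : ℝ :=
  ∫ x, (∫ y, (if ε < |x - y| then (x - y)⁻¹ * f y else 0) ∂σ) * g x ∂w

lemma InF.measurable_bounded {f : ℝ → ℝ} (hf : InF f) :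
    Measurable f ∧ ∃ M : ℝ, ∀ x, |f x| ≤ M ∧ (f x ≠ 0 → |x| ≤ M) := by
  unfold InF at hf
  induction hf using Submodule.span_induction with
  | mem f h =>
    obtain ⟨a, b, rfl⟩ := h
    refine ⟨measurable_one.indicator measurableSet_Ico, max 1 (max |a| |b|), fun x => ?_⟩
    by_cases hx : x ∈ Ico a b
    · simp only [indicator_of_mem hx, Pi.one_apply, abs_one]
      exact ⟨le_max_left _ _, fun _ => (abs_le_max_abs_abs hx.1 hx.2.le).trans (le_max_right _ _)⟩
    · simp [indicator_of_notMem hx]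
  | zero => exact ⟨measurable_zero, 0, fun x => by simp⟩
  | add f g _ _ hf hg =>
    obtain ⟨mf, M, hM⟩ := hf
    obtain ⟨mg, N, hN⟩ := hg
    refine ⟨mf.add mg, M + N, fun x => ⟨?_, fun h => ?_⟩⟩
    · exact (abs_add_le _ _).trans (add_le_add (hM x).1 (hN x).1)
    · have h1 := (abs_nonneg _).trans (hM x).1
      have h2 := (abs_nonneg _).trans (hN x).1
      by_cases hfx : f x = 0
      · have : g x ≠ 0 := fun h' => h (by simp [hfx, h'])
        linarith [(hN x).2 this]
      · linarith [(hM x).2 hfx]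
  | smul c f _ hf =>
    obtain ⟨mf, M, hM⟩ := hf
    refine ⟨mf.const_smul c, max M (|c| * M), fun x => ⟨?_, fun h => ?_⟩⟩
    · simp only [Pi.smul_apply, smul_eq_mul, abs_mul]
      exact (mul_le_mul_of_nonneg_left (hM x).1 (abs_nonneg _)).trans (le_max_right _ _)
    · exact ((hM x).2 (fun h' => h (by simp [h']))).trans (le_max_left _ _)

/-- The set of points of `I` within distance `t` of some point of `J`. -/
def nearPart (I J : Set ℝ) (t : ℝ) : Set ℝ := {y | y ∈ I ∧ ∃ x ∈ J, |x - y| ≤ t}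

/-- Of two disjoint intervals, one lies entirely below the other. -/
lemma below_or_above {I J : Set ℝ} (hI : I.OrdConnected) (hJ : J.OrdConnected)
    (hd : Disjoint I J) :
    (∀ y ∈ I, ∀ x ∈ J, y < x) ∨ (∀ y ∈ I, ∀ x ∈ J, x < y) := by
  by_cases h : ∃ y ∈ I, ∃ x ∈ J, y < x
  · left
    obtain ⟨y, hy, x, hx, hyx⟩ := h
    intro y' hy' x' hx'
    have h1 : y' < x := by
      by_contra! h'
      exact disjoint_left.1 hd (hI.out hy hy' ⟨hyx.le, h'⟩) hx
    by_contra! h'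
    exact disjoint_left.1 hd hy' (hJ.out hx' hx ⟨h', h1.le⟩)
  · right
    push Not at h
    intro y hy x hx
    refine lt_of_le_of_ne (h y hy x hx) ?_
    rintro rfl
    exact disjoint_left.1 hd hy hx

/-- `nearPart I J t` has diameter at most `t`: the point of `J` close to the end of it far from `J`
is within distance `t` of that end, and the whole of `I` lies on one side of `J`. -/
lemma sub_le_of_mem_nearPart {I J : Set ℝ} (hI : I.OrdConnected) (hJ : J.OrdConnected)
    (hd : Disjoint I J) {t y y' : ℝ} (hy : y ∈ nearPart I J t) (hy' : y' ∈ nearPart I J t) :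
    y' - y ≤ t := by
  obtain ⟨hyI, x, hx, hxy⟩ := hy
  obtain ⟨hyI', x', hx', hxy'⟩ := hy'
  rw [abs_le] at hxy hxy'
  rcases below_or_above hI hJ hd with h | h
  · linarith [h y' hyI' x hx]
  · linarith [h y hyI x' hx']

lemma ordConnected_nearPart {I J : Set ℝ} (hI : I.OrdConnected) (hJ : J.OrdConnected)
    (hd : Disjoint I J) (t : ℝ) : (nearPart I J t).OrdConnected := by
  refine ⟨?_⟩
  rintro y₁ ⟨h₁, x₁, hx₁, ht₁⟩ y₂ ⟨h₂, x₂, hx₂, ht₂⟩ y ⟨hy₁, hy₂⟩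
  refine ⟨hI.out h₁ h₂ ⟨hy₁, hy₂⟩, ?_⟩
  rw [abs_le] at ht₁ ht₂
  rcases below_or_above hI hJ hd with h | h
  · refine ⟨x₁, hx₁, abs_le.2 ⟨?_, ?_⟩⟩ <;> linarith [h y₂ h₂ x₁ hx₁]
  · refine ⟨x₂, hx₂, abs_le.2 ⟨?_, ?_⟩⟩ <;> linarith [h y₁ h₁ x₂ hx₂]

/-- The `A₂` condition tested on the part of `I` within distance `t` of `J`. -/
lemma measure_near_mul_le {σ w : Measure ℝ} {A : ℝ} (hA : A2star σ w A) {I J : Set ℝ}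
    (hI : I.OrdConnected) (hJ : J.OrdConnected) (hd : Disjoint I J) {t : ℝ} (ht : 0 < t) :
    σ (nearPart I J t) * w (nearPart J I t) ≤ ENNReal.ofReal (4 * A ^ 2 * t ^ 2) := by
  rcases (nearPart I J t).eq_empty_or_nonempty with he | ⟨y₀, hy₀⟩
  · simp [he]
  have hoc := ordConnected_nearPart hI hJ hd t
  have hdiam : ∀ y ∈ nearPart I J t, ∀ y' ∈ nearPart I J t, y' - y ≤ t :=
    fun y hy y' hy' => sub_le_of_mem_nearPart hI hJ hd hy hy'
  have hba : BddAbove (nearPart I J t) := ⟨y₀ + t, fun y hy => by linarith [hdiam _ hy₀ _ hy]⟩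
  have hbb : BddBelow (nearPart I J t) := ⟨y₀ - t, fun y hy => by linarith [hdiam _ hy _ hy₀]⟩
  have hbd : Bornology.IsBounded (nearPart I J t) := isBounded_iff_bddBelow_bddAbove.2 ⟨hbb, hba⟩
  have key := hA _ hoc hbd
  have hsub : nearPart J I t ⊆ (nearPart I J t)ᶜ :=
    fun x hx hx' => disjoint_left.1 hd hx'.1 hx.1
  set c := (sInf (nearPart I J t) + sSup (nearPart I J t)) / 2 with hc
  have hpt : ∀ x ∈ nearPart J I t, (4 * t ^ 2)⁻¹ ≤ ((x - c) ^ 2)⁻¹ := by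
    intro x hx
    have hxn := hsub hx
    obtain ⟨hxJ, y, hyI, hxy⟩ := hx
    have hy : y ∈ nearPart I J t := ⟨hyI, x, hxJ, by rwa [abs_sub_comm]⟩
    have h1 : sSup (nearPart I J t) ≤ y + t :=
      csSup_le ⟨y, hy⟩ fun z hz => by linarith [hdiam _ hy _ hz]
    have h2 : y - t ≤ sInf (nearPart I J t) :=
      le_csInf ⟨y, hy⟩ fun z hz => by linarith [hdiam _ hz _ hy]
    have h3 : y ≤ sSup (nearPart I J t) := le_csSup hba hy
    have h4 : sInf (nearPart I J t) ≤ y := csInf_le hbb hy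
    -- the center belongs to the interval, so `x ≠ c` and the inverse square is not `0⁻¹ = 0`
    have hne : x - c ≠ 0 := by
      intro h0
      have hxc : x = c := by linarith
      rcases (h4.trans h3).eq_or_lt with h | h
      · have : x = y := by linarith
        exact hxn (this ▸ hy)
      · obtain ⟨a, ha, hac⟩ := exists_lt_of_csInf_lt (b := x) ⟨y, hy⟩ (by linarith)
        obtain ⟨b, hb, hcb⟩ := exists_lt_of_lt_csSup (b := x) ⟨y, hy⟩ (by linarith)
        exact hxn (hoc.out ha hb ⟨hac.le, hcb.le⟩)
    rw [abs_le] at hxy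
    have h5 : |x - c| ≤ 2 * t := abs_le.2 ⟨by linarith, by linarith⟩
    have h6 : (x - c) ^ 2 ≤ 4 * t ^ 2 := by
      have := sq_le_sq' (by linarith [(abs_le.1 h5).1]) (abs_le.1 h5).2
      linarith
    exact inv_anti₀ (by positivity) h6
  have hX : MeasurableSet (nearPart J I t) :=
    (ordConnected_nearPart hJ hI hd.symm t).measurableSet
  have hlow : ENNReal.ofReal ((4 * t ^ 2)⁻¹) * w (nearPart J I t) ≤
      ∫⁻ x in (nearPart I J t)ᶜ, ENNReal.ofReal (((x - c) ^ 2)⁻¹) ∂w := by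
    rw [← setLIntegral_const]
    refine le_trans ?_ (lintegral_mono_set hsub)
    exact setLIntegral_mono' hX fun x hx => ENNReal.ofReal_le_ofReal (hpt x hx)
  have h4t : (0 : ℝ) < 4 * t ^ 2 := by positivity
  calc σ (nearPart I J t) * w (nearPart J I t)
      = ENNReal.ofReal (4 * t ^ 2) *
          (σ (nearPart I J t) * (ENNReal.ofReal ((4 * t ^ 2)⁻¹) * w (nearPart J I t))) := by
        have : ENNReal.ofReal (4 * t ^ 2) * ENNReal.ofReal ((4 * t ^ 2)⁻¹) = 1 := by
          rw [← ENNReal.ofReal_mul h4t.le, mul_inv_cancel₀ h4t.ne', ENNReal.ofReal_one]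
        rw [mul_left_comm (σ _), ← mul_assoc, this, one_mul]
    _ ≤ ENNReal.ofReal (4 * t ^ 2) * ENNReal.ofReal (A ^ 2) := by
        gcongr
        exact le_trans (by gcongr) key
    _ = ENNReal.ofReal (4 * A ^ 2 * t ^ 2) := by
        rw [← ENNReal.ofReal_mul h4t.le]
        ring_nf

/-- Dyadic majorant of the kernel on `J × I`; the summands are product functions, so that the
iterated integral of the sum is explicit. -/
lemma kernel_le_tsum {I J : Set ℝ} {R x y : ℝ} (hR : 0 < R) (hx : x ∈ J) (hy : y ∈ I)
    (hxy : |x - y| ≤ R) :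
    ENNReal.ofReal |(x - y)⁻¹| ≤ ∑' n : ℕ,
      (nearPart J I (R * (1 / 2) ^ n)).indicator 1 x *
        (ENNReal.ofReal (2 ^ (n + 1) / R) *
          (nearPart I J (R * (1 / 2) ^ n)).indicator (1 : ℝ → ℝ≥0∞) y) := by
  rcases (abs_nonneg (x - y)).eq_or_lt with h0 | h0
  · simp [abs_eq_zero.1 h0.symm]
  obtain ⟨n, hn1, hn2⟩ := exists_nat_pow_near_of_lt_one (x := |x - y| / R) (y := (1 / 2 : ℝ))
    (by positivity) ((div_le_one hR).2 hxy) (by norm_num) (by norm_num)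
  rw [lt_div_iff₀ hR] at hn1
  rw [div_le_iff₀ hR] at hn2
  have hd : |x - y| ≤ R * (1 / 2) ^ n := by linarith
  have hxm : x ∈ nearPart J I (R * (1 / 2) ^ n) := ⟨hx, y, hy, by rwa [abs_sub_comm]⟩
  have hym : y ∈ nearPart I J (R * (1 / 2) ^ n) := ⟨hy, x, hx, hd⟩
  refine le_trans ?_ (ENNReal.le_tsum n)
  simp only [indicator_of_mem hxm, indicator_of_mem hym, Pi.one_apply, mul_one, one_mul]
  apply ENNReal.ofReal_le_ofReal
  rw [abs_inv, inv_le_comm₀ h0 (by positivity), inv_div]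
  calc R / 2 ^ (n + 1) = (1 / 2) ^ (n + 1) * R := by rw [one_div, inv_pow]; ring
    _ ≤ |x - y| := hn1.le

/-- The dyadic majorant has finite iterated integral: by the `A₂` condition the `n`-th summand
contributes at most `8 A² R 2⁻ⁿ`. -/
lemma lintegral_kernel_ne_top {σ w : Measure ℝ} {A : ℝ} (hA : A2star σ w A) {I J : Set ℝ}
    (hI : I.OrdConnected) (hJ : J.OrdConnected) (hd : Disjoint I J) {R : ℝ} (hR : 0 < R) :
    ∫⁻ x, ∫⁻ y, ∑' n : ℕ,
      (nearPart J I (R * (1 / 2) ^ n)).indicator 1 x *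
        (ENNReal.ofReal (2 ^ (n + 1) / R) *
          (nearPart I J (R * (1 / 2) ^ n)).indicator (1 : ℝ → ℝ≥0∞) y) ∂σ ∂w ≠ ⊤ := by
  have mY : ∀ t, MeasurableSet (nearPart I J t) :=
    fun t => (ordConnected_nearPart hI hJ hd t).measurableSet
  have mX : ∀ t, MeasurableSet (nearPart J I t) :=
    fun t => (ordConnected_nearPart hJ hI hd.symm t).measurableSet
  have mYi : ∀ t, Measurable ((nearPart I J t).indicator (1 : ℝ → ℝ≥0∞)) :=
    fun t => measurable_one.indicator (mY t)
  have mXi : ∀ t, Measurable ((nearPart J I t).indicator (1 : ℝ → ℝ≥0∞)) :=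
    fun t => measurable_one.indicator (mX t)
  have h1 : ∀ x, ∫⁻ y, ∑' n : ℕ,
      (nearPart J I (R * (1 / 2) ^ n)).indicator 1 x *
        (ENNReal.ofReal (2 ^ (n + 1) / R) *
          (nearPart I J (R * (1 / 2) ^ n)).indicator (1 : ℝ → ℝ≥0∞) y) ∂σ =
      ∑' n : ℕ, (nearPart J I (R * (1 / 2) ^ n)).indicator 1 x *
        (ENNReal.ofReal (2 ^ (n + 1) / R) * σ (nearPart I J (R * (1 / 2) ^ n))) := by
    intro x
    rw [lintegral_tsum fun n => (((mYi _).const_mul _).const_mul _).aemeasurable]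
    refine tsum_congr fun n => ?_
    rw [lintegral_const_mul _ ((mYi _).const_mul _), lintegral_const_mul _ (mYi _),
      lintegral_indicator_one (mY _)]
  simp_rw [h1]
  rw [lintegral_tsum fun n => ((mXi _).mul_const _).aemeasurable]
  have h2 : ∀ n : ℕ, ∫⁻ x, (nearPart J I (R * (1 / 2) ^ n)).indicator 1 x *
        (ENNReal.ofReal (2 ^ (n + 1) / R) * σ (nearPart I J (R * (1 / 2) ^ n))) ∂w ≤
      ENNReal.ofReal (8 * A ^ 2 * R * (1 / 2) ^ n) := by
    intro n
    rw [lintegral_mul_const _ (mXi _), lintegral_indicator_one (mX _)]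
    calc w (nearPart J I (R * (1 / 2) ^ n)) *
          (ENNReal.ofReal (2 ^ (n + 1) / R) * σ (nearPart I J (R * (1 / 2) ^ n)))
        = ENNReal.ofReal (2 ^ (n + 1) / R) * (σ (nearPart I J (R * (1 / 2) ^ n)) *
            w (nearPart J I (R * (1 / 2) ^ n))) := by ring
      _ ≤ ENNReal.ofReal (2 ^ (n + 1) / R) *
            ENNReal.ofReal (4 * A ^ 2 * (R * (1 / 2) ^ n) ^ 2) := by
          gcongr
          exact measure_near_mul_le hA hI hJ hd (by positivity)
      _ = ENNReal.ofReal (8 * A ^ 2 * R * (1 / 2) ^ n) := by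
          rw [← ENNReal.ofReal_mul (by positivity)]
          congr 1
          rw [one_div, inv_pow]
          field_simp
          ring
  refine ne_top_of_le_ne_top ?_ (ENNReal.tsum_le_tsum h2)
  rw [← ENNReal.ofReal_tsum_of_nonneg (fun n => by positivity)
    ((summable_geometric_of_lt_one (by norm_num) (by norm_num)).mul_left _)]
  exact ENNReal.ofReal_ne_top

theorem statement9 (σ w : Measure ℝ) [IsLocallyFiniteMeasure σ] [IsLocallyFiniteMeasure w]
    (A A' : ℝ) (hA : A2star σ w A) (hA' : A2star w σ A')
    (f g : ℝ → ℝ) (hf : InF f) (hg : InF g) (hd : DisjointlySupported f g) :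
    -- absolute convergence of the double integral:
    (∫⁻ x, (∫⁻ y, ENNReal.ofReal |(x - y)⁻¹ * f y| ∂σ) * ENNReal.ofReal |g x| ∂w ≠ ⊤) ∧
    -- convergence of the truncations:
    Filter.Tendsto (truncPairing σ w f g) (𝓝[>] (0 : ℝ))
      (𝓝 (hilbertPairing σ w f g)) := by
  obtain ⟨I, J, hI, hJ, hIJ, hfI, hgJ⟩ := hd
  obtain ⟨mf, M, hM⟩ := hf.measurable_bounded
  obtain ⟨mg, N, hN⟩ := hg.measurable_bounded
  have hM0 : 0 ≤ M := (abs_nonneg _).trans (hM 0).1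
  have hN0 : 0 ≤ N := (abs_nonneg _).trans (hN 0).1
  have hfin : ∫⁻ x, (∫⁻ y, ENNReal.ofReal |(x - y)⁻¹ * f y| ∂σ) * ENNReal.ofReal |g x| ∂w ≠ ⊤ := by
    have hR : 0 < M + N + 1 := by linarith
    have hK := lintegral_kernel_ne_top hA hI hJ hIJ hR
    refine ne_top_of_le_ne_top (ENNReal.mul_ne_top hK
      (ENNReal.ofReal_ne_top (r := M * N))) ?_
    rw [← lintegral_mul_const' _ _ ENNReal.ofReal_ne_top]
    refine lintegral_mono fun x => ?_
    rw [← lintegral_mul_const' _ _ ENNReal.ofReal_ne_top,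
      ← lintegral_mul_const' _ _ ENNReal.ofReal_ne_top]
    refine lintegral_mono fun y => ?_
    by_cases hy : f y = 0
    · simp [hy]
    by_cases hx : g x = 0
    · simp [hx]
    have hxy : |x - y| ≤ M + N + 1 := by
      linarith [abs_sub x y, (hM y).2 hy, (hN x).2 hx]
    rw [abs_mul, ENNReal.ofReal_mul (abs_nonneg _), mul_assoc,
      ← ENNReal.ofReal_mul (abs_nonneg _)]
    refine mul_le_mul' (kernel_le_tsum hR (hgJ hx) (hfI hy) hxy) (ENNReal.ofReal_le_ofReal ?_)
    exact mul_le_mul (hM y).1 (hN x).1 (abs_nonneg _) hM0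
  refine ⟨hfin, ?_⟩
  have mK : Measurable fun p : ℝ × ℝ => (p.1 - p.2)⁻¹ * f p.2 :=
    (measurable_fst.sub measurable_snd).inv.mul (mf.comp measurable_snd)
  have mT : ∀ ε : ℝ, Measurable fun p : ℝ × ℝ =>
      if ε < |p.1 - p.2| then (p.1 - p.2)⁻¹ * f p.2 else 0 := fun ε =>
    Measurable.ite (measurableSet_lt measurable_const
      (continuous_fst.sub continuous_snd).abs.measurable) mK measurable_const
  have mL : Measurable fun x => ∫⁻ y, ENNReal.ofReal |(x - y)⁻¹ * f y| ∂σ :=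
    Measurable.lintegral_prod_right' (f := fun p : ℝ × ℝ =>
      ENNReal.ofReal |(p.1 - p.2)⁻¹ * f p.2|)
      (ENNReal.measurable_ofReal.comp (continuous_abs.measurable.comp mK))
  have mG : Measurable fun x =>
      (∫⁻ y, ENNReal.ofReal |(x - y)⁻¹ * f y| ∂σ) * ENNReal.ofReal |g x| :=
    mL.mul (ENNReal.measurable_ofReal.comp (continuous_abs.measurable.comp mg))
  -- where `g x ≠ 0`, the inner integral converges absolutely for almost every `x`
  have hae : ∀ᵐ x ∂w, g x ≠ 0 → Integrable (fun y => (x - y)⁻¹ * f y) σ := by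
    filter_upwards [ae_lt_top mG hfin] with x hx hgx
    refine ⟨(mK.comp measurable_prodMk_left).aestronglyMeasurable, ?_⟩
    rw [hasFiniteIntegral_iff_norm]
    simp only [Real.norm_eq_abs]
    by_contra h
    rw [not_lt, top_le_iff] at h
    rw [h, ENNReal.top_mul (by simpa using hgx)] at hx
    exact lt_irrefl _ hx
  have htrunc : ∀ ε x y : ℝ, ‖if ε < |x - y| then (x - y)⁻¹ * f y else 0‖ ≤
      |(x - y)⁻¹ * f y| := by
    intro ε x y
    split_ifs
    · exact le_rfl
    · rw [norm_zero]
      exact abs_nonneg _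
  unfold truncPairing hilbertPairing
  refine tendsto_integral_filter_of_dominated_convergence
    (fun x => ((∫⁻ y, ENNReal.ofReal |(x - y)⁻¹ * f y| ∂σ) * ENNReal.ofReal |g x|).toReal)
    (Eventually.of_forall fun ε => ?_) (Eventually.of_forall fun ε => ?_)
    (integrable_toReal_of_lintegral_ne_top mG.aemeasurable hfin) ?_
  · exact (((mT ε).stronglyMeasurable.integral_prod_right' (ν := σ)).mul
      mg.stronglyMeasurable).aestronglyMeasurable
  · filter_upwards [hae] with x hx
    by_cases hgx : g x = 0
    · simp [hgx]
    have hi := hx hgx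
    rw [norm_mul, ENNReal.toReal_mul, ENNReal.toReal_ofReal (abs_nonneg _), Real.norm_eq_abs (g x)]
    refine mul_le_mul_of_nonneg_right ?_ (abs_nonneg _)
    rw [← integral_eq_lintegral_of_nonneg_ae (Eventually.of_forall fun y => abs_nonneg _)
      hi.abs.aestronglyMeasurable]
    exact norm_integral_le_of_norm_le hi.abs (Eventually.of_forall fun y => htrunc ε x y)
  · filter_upwards [hae] with x hx
    by_cases hgx : g x = 0
    · simp [hgx]
    have hi := hx hgx
    refine Tendsto.mul_const _ ?_
    refine tendsto_integral_filter_of_dominated_convergence (fun y => |(x - y)⁻¹ * f y|)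
      (Eventually.of_forall fun ε => ((mT ε).comp measurable_prodMk_left).aestronglyMeasurable)
      (Eventually.of_forall fun ε => Eventually.of_forall fun y => htrunc ε x y) hi.abs
      (Eventually.of_forall fun y => ?_)
    rcases (abs_nonneg (x - y)).eq_or_lt with h0 | h0
    · -- on the diagonal both the kernel and its truncations vanish, since `0⁻¹ = 0`
      simp [abs_eq_zero.1 h0.symm]
    · refine tendsto_const_nhds.congr' ?_
      filter_upwards [mem_nhdsWithin_of_mem_nhds (Iio_mem_nhds h0)] with ε hε
      rw [if_pos (mem_Iio.1 hε), mul_comm]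
end
end
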